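/- Let {G_n} be a sequence of graphs (with |V(G_n)|→∞) converging to a graphon w, i.e. δ_□(w_{G_n}, w) → 0 for some/any labelings. Then w is Robinsonian (there exists a Robinson graphon u with δ_□(u,w) = 0) if and only if Γ̃(G_n) → 0. -/

import Mathlib

/-!
The proof works with box integrals `∫_{S×T} D` (`boxInt`) and with `CutLE D η`, the supremum-free
form of the bound `‖D‖_□ ≤ η`. A kernel is tested on the `m²` cells of the equipartition of `[0,1]`
into `m` intervals of length `1/m`.

**A Robinson limit forces `Γ̃ → 0`.** The functional `Γ` vanishes at a Robinson graphon and is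
continuous there: `Γ` is controlled by box integrals over finitely many intervals against an
arbitrary set `A`, so a graphon that is cut-close to a Robinson one has small `Γ`
(`Gamma_le_of_cutLE`). It remains to find a labeling of `G n` that is cut-close to a Robinson
graphon. If `G n` is cut-close to a Robinson graphon `u` after a rearrangement, the measures of the
intersections of vertex intervals with the rearranged cells of an equipartition form a fractional
assignment of vertices to cells; Hall's theorem rounds it to an assignment in which each cell
receives at most about three times its share of vertices (`exists_assignment`). The Robinson
property sandwiches `u` between an upper and a lower step matrix whose difference telescopes along
antidiagonals and so has small average (`sum_symExt_le`). Listing the vertices in the order of their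
cells gives the labeling (`exists_labeling`).

**`Γ̃ → 0` forces a Robinson limit.** Take labelings with `Γ → 0` and the limit along an ultrafilter
of all their box integrals. Smallness of `Γ` makes the limiting averages monotone as a box moves
away from the diagonal (`Gamma_left`, `Gamma_right`). The supremum of the averages over pairs of
cells enclosing a point is a Robinson graphon by construction (`limKer`), and monotonicity
sandwiches both it and the labeled graphs between the same step matrices, so that these graphs come
cut-close to it infinitely often (`cutLE_limKer`). A relabeling changes the step graphon by an
interval exchange (`isRearr_exch`), so composing with the rearrangements that bring `G n` near `w`
gives `cutDist u w = 0`.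
-/

open MeasureTheory Set Filter

/-- The cut norm of a kernel `w` on `[0,1]²`. -/
noncomputable def cutNorm (w : ℝ → ℝ → ℝ) : ℝ :=
  sSup {r : ℝ | ∃ S T : Set ℝ, MeasurableSet S ∧ MeasurableSet T ∧
    S ⊆ Icc 0 1 ∧ T ⊆ Icc 0 1 ∧ r = |∫ x in S, ∫ y in T, w x y|}

/-- The cut distance `δ_□(u,w) = inf_φ ‖u^φ − w‖_□`, the infimum being over
measure-preserving bijections `φ` of `[0,1]`. -/
noncomputable def cutDist (u w : ℝ → ℝ → ℝ) : ℝ :=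
  sInf {r : ℝ | ∃ φ : ℝ → ℝ,
    MeasurePreserving φ (volume.restrict (Icc 0 1)) (volume.restrict (Icc 0 1)) ∧
    Set.BijOn φ (Icc 0 1) (Icc 0 1) ∧
    r = cutNorm (fun x y => u (φ x) (φ y) - w x y)}

/-- `Γ(w, A)`. -/
noncomputable def gammaA (w : ℝ → ℝ → ℝ) (A : Set ℝ) : ℝ :=
  ∫ y in Icc (0:ℝ) 1, ∫ z in Icc (0:ℝ) 1,
    if y < z then
      max (∫ x in A ∩ Icc 0 y, (w x z - w x y)) 0
        + max (∫ x in A ∩ Icc z 1, (w x y - w x z)) 0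
    else 0

/-- `Γ(w) = sup { Γ(w,A) : A ⊆ [0,1] measurable }`. -/
noncomputable def Gamma (w : ℝ → ℝ → ℝ) : ℝ :=
  sSup {r : ℝ | ∃ A : Set ℝ, MeasurableSet A ∧ A ⊆ Icc 0 1 ∧ r = gammaA w A}

/-- A graphon: symmetric, measurable, `[0,1]`-valued on `[0,1]²`. -/
def IsGraphon (w : ℝ → ℝ → ℝ) : Prop :=
  Measurable (Function.uncurry w) ∧ (∀ x y, w x y = w y x) ∧
    ∀ x y : ℝ, x ∈ Icc (0:ℝ) 1 → y ∈ Icc (0:ℝ) 1 → w x y ∈ Icc (0:ℝ) 1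

/-- The Robinson property. -/
def IsRobinson (w : ℝ → ℝ → ℝ) : Prop :=
  ∀ x y z : ℝ, 0 ≤ x → x ≤ y → y ≤ z → z ≤ 1 → w x z ≤ min (w x y) (w y z)

/-- A finite labeled graph, given by a symmetric loopless boolean adjacency matrix. -/
structure FinGraph where
  n : ℕ
  adj : Fin n → Fin n → Bool
  symm : ∀ i j, adj i j = adj j i
  loopless : ∀ i, adj i i = false

/-- The index of the subinterval `((i-1)/n, i/n]` containing `x`, as a natural number
(zero-based). -/
noncomputable def vertexOf (n : ℕ) (x : ℝ) : ℕ := (⌈(n : ℝ) * x⌉ - 1).toNat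

/-- The step graphon `w_G` associated with the adjacency matrix of a labeled graph:
it takes the value `A_{ij}` on the cell `I_i × I_j`. -/
noncomputable def graphStep (G : FinGraph) (x y : ℝ) : ℝ :=
  if h : vertexOf G.n x < G.n ∧ vertexOf G.n y < G.n then
    (if G.adj ⟨vertexOf G.n x, h.1⟩ ⟨vertexOf G.n y, h.2⟩ then 1 else 0)
  else 0

/-- Relabeling a graph by a permutation of its vertices. -/
def relabel (G : FinGraph) (σ : Equiv.Perm (Fin G.n)) : FinGraph where
  n := G.n
  adj := fun i j => G.adj (σ i) (σ j)
  symm := fun i j => G.symm (σ i) (σ j)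
  loopless := fun i => G.loopless (σ i)

/-- `Γ̃(G) = min { Γ(w_H) : H a labeled graph isomorphic to G }`. -/
noncomputable def gammaTildeG (G : FinGraph) : ℝ :=
  sInf {r : ℝ | ∃ σ : Equiv.Perm (Fin G.n), r = Gamma (graphStep (relabel G σ))}

/-! ### Box integrals of bounded measurable kernels -/

/-- The integral of the kernel `D` over the box `S × T`. -/
noncomputable def boxInt (D : ℝ → ℝ → ℝ) (S T : Set ℝ) : ℝ := ∫ x in S, ∫ y in T, D x y

/-- Jointly measurable kernels that are bounded on the unit square. -/
def Ker (D : ℝ → ℝ → ℝ) : Prop :=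
  Measurable (Function.uncurry D) ∧
    ∃ C : ℝ, ∀ x ∈ Icc (0:ℝ) 1, ∀ y ∈ Icc (0:ℝ) 1, |D x y| ≤ C

/-- Measurable subsets of the unit interval. -/
def USet (S : Set ℝ) : Prop := MeasurableSet S ∧ S ⊆ Icc 0 1

/-- `‖D‖_□ ≤ η`, written without the supremum. -/
def CutLE (D : ℝ → ℝ → ℝ) (η : ℝ) : Prop :=
  ∀ S T : Set ℝ, USet S → USet T → |boxInt D S T| ≤ η

lemma USet.unit : USet (Icc (0:ℝ) 1) := ⟨measurableSet_Icc, le_rfl⟩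

lemma USet.lt_top {S : Set ℝ} (hS : USet S) : volume S < ⊤ :=
  (measure_mono hS.2).trans_lt (by simp)

lemma USet.real_le {S : Set ℝ} (hS : USet S) : volume.real S ≤ 1 := by
  have := measureReal_mono hS.2 (by simp : volume (Icc (0:ℝ) 1) ≠ ⊤)
  simpa using this

lemma USet.inter {S T : Set ℝ} (hS : USet S) (hT : MeasurableSet T) : USet (S ∩ T) :=
  ⟨hS.1.inter hT, fun _ h => hS.2 h.1⟩

lemma IsGraphon.ker {f : ℝ → ℝ → ℝ} (hf : IsGraphon f) : Ker f :=
  ⟨hf.1, 1, fun x hx y hy => by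
    have := hf.2.2 x y hx hy
    rw [abs_of_nonneg this.1]; exact this.2⟩

lemma Ker.sub {f g : ℝ → ℝ → ℝ} (hf : Ker f) (hg : Ker g) :
    Ker (fun x y => f x y - g x y) := by
  obtain ⟨mf, C, hC⟩ := hf
  obtain ⟨mg, C', hC'⟩ := hg
  refine ⟨mf.sub mg, C + C', fun x hx y hy => ?_⟩
  exact (abs_sub _ _).trans (add_le_add (hC x hx y hy) (hC' x hx y hy))

lemma Ker.const (c : ℝ) : Ker (fun _ _ => c) :=
  ⟨measurable_const, |c|, fun _ _ _ _ => le_rfl⟩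

lemma Ker.comp {f : ℝ → ℝ → ℝ} (hf : Ker f) {φ : ℝ → ℝ} (hφ : Measurable φ)
    (hm : MapsTo φ (Icc 0 1) (Icc 0 1)) : Ker (fun x y => f (φ x) (φ y)) := by
  obtain ⟨mf, C, hC⟩ := hf
  refine ⟨mf.comp ((hφ.comp measurable_fst).prodMk (hφ.comp measurable_snd)), C,
    fun x hx y hy => hC _ (hm hx) _ (hm hy)⟩

lemma Ker.integrableOn {D : ℝ → ℝ → ℝ} (hD : Ker D) {S T : Set ℝ} (hS : USet S) (hT : USet T) :
    IntegrableOn (Function.uncurry D) (S ×ˢ T) (volume.prod volume) := by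
  obtain ⟨mD, C, hC⟩ := hD
  refine Measure.integrableOn_of_bounded (M := C) ?_ mD.aestronglyMeasurable ?_
  · rw [Measure.prod_prod]; exact (ENNReal.mul_lt_top hS.lt_top hT.lt_top).ne
  · refine (ae_restrict_iff' (hS.1.prod hT.1)).2 (Eventually.of_forall ?_)
    rintro ⟨x, y⟩ ⟨hx, hy⟩
    exact hC x (hS.2 hx) y (hT.2 hy)

lemma Ker.boxInt_eq {D : ℝ → ℝ → ℝ} (hD : Ker D) {S T : Set ℝ} (hS : USet S) (hT : USet T) :
    boxInt D S T = ∫ p in S ×ˢ T, Function.uncurry D p ∂(volume.prod volume) := by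
  rw [setIntegral_prod _ (hD.integrableOn hS hT)]; rfl

lemma Ker.inner {D : ℝ → ℝ → ℝ} (hD : Ker D) {T : Set ℝ} (hT : USet T) {x : ℝ}
    (hx : x ∈ Icc (0:ℝ) 1) : IntegrableOn (D x) T := by
  obtain ⟨mD, C, hC⟩ := hD
  refine Measure.integrableOn_of_bounded (M := C) hT.lt_top.ne
    (mD.comp measurable_prodMk_left).aestronglyMeasurable ?_
  exact (ae_restrict_iff' hT.1).2 (Eventually.of_forall fun y hy => hC x hx y (hT.2 hy))

lemma Ker.outer {D : ℝ → ℝ → ℝ} (hD : Ker D) {S T : Set ℝ} (hS : USet S) (hT : USet T) :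
    IntegrableOn (fun x => ∫ y in T, D x y) S := by
  have h := hD.integrableOn hS hT
  rw [IntegrableOn, ← Measure.prod_restrict] at h
  exact h.integral_prod_left

lemma boxInt_sub {f g : ℝ → ℝ → ℝ} (hf : Ker f) (hg : Ker g) {S T : Set ℝ} (hS : USet S)
    (hT : USet T) : boxInt (fun x y => f x y - g x y) S T = boxInt f S T - boxInt g S T := by
  rw [(hf.sub hg).boxInt_eq hS hT, hf.boxInt_eq hS hT, hg.boxInt_eq hS hT,
    ← integral_sub (hf.integrableOn hS hT) (hg.integrableOn hS hT)]
  rfl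

lemma boxInt_mono {f g : ℝ → ℝ → ℝ} (hf : Ker f) (hg : Ker g) {S T : Set ℝ} (hS : USet S)
    (hT : USet T) (h : ∀ x ∈ S, ∀ y ∈ T, f x y ≤ g x y) : boxInt f S T ≤ boxInt g S T := by
  rw [hf.boxInt_eq hS hT, hg.boxInt_eq hS hT]
  exact setIntegral_mono_on (hf.integrableOn hS hT) (hg.integrableOn hS hT) (hS.1.prod hT.1)
    fun p hp => h _ hp.1 _ hp.2

lemma boxInt_mono_set {f : ℝ → ℝ → ℝ} (hf : Ker f) {S T S' T' : Set ℝ} (hS : USet S)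
    (hT : USet T) (hS' : USet S') (hT' : USet T') (h1 : S ⊆ S') (h2 : T ⊆ T')
    (h : ∀ x ∈ S', ∀ y ∈ T', 0 ≤ f x y) : boxInt f S T ≤ boxInt f S' T' := by
  rw [hf.boxInt_eq hS hT, hf.boxInt_eq hS' hT']
  refine setIntegral_mono_set (hf.integrableOn hS' hT') ?_ (prod_mono h1 h2).eventuallyLE
  exact (ae_restrict_iff' (hS'.1.prod hT'.1)).2
    (Eventually.of_forall fun p hp => h _ hp.1 _ hp.2)

lemma boxInt_const (c : ℝ) (S T : Set ℝ) :
    boxInt (fun _ _ => c) S T = c * volume.real S * volume.real T := by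
  simp [boxInt]; ring

lemma boxInt_comm {f : ℝ → ℝ → ℝ} (hf : Ker f) (hs : ∀ x y, f x y = f y x) {S T : Set ℝ}
    (hS : USet S) (hT : USet T) : boxInt f S T = boxInt f T S := by
  have h := hf.integrableOn hS hT
  rw [IntegrableOn, ← Measure.prod_restrict] at h
  unfold boxInt
  rw [integral_integral_swap h]
  simp_rw [hs]

lemma boxInt_congr {f g : ℝ → ℝ → ℝ} {S T : Set ℝ} (hS : USet S)
    (hT : USet T) (h : ∀ x ∈ S, ∀ y ∈ T, f x y = g x y) : boxInt f S T = boxInt g S T :=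
  setIntegral_congr_fun hS.1 fun x hx => setIntegral_congr_fun hT.1 fun y hy => h x hx y hy

lemma boxInt_le {f : ℝ → ℝ → ℝ} (hf : Ker f) {S T : Set ℝ} (hS : USet S)
    (hT : USet T) {c : ℝ} (h : ∀ x ∈ S, ∀ y ∈ T, f x y ≤ c) :
    boxInt f S T ≤ c * volume.real S * volume.real T := by
  rw [← boxInt_const]; exact boxInt_mono hf (Ker.const c) hS hT h

lemma le_boxInt {f : ℝ → ℝ → ℝ} (hf : Ker f) {S T : Set ℝ} (hS : USet S)
    (hT : USet T) {c : ℝ} (h : ∀ x ∈ S, ∀ y ∈ T, c ≤ f x y) :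
    c * volume.real S * volume.real T ≤ boxInt f S T := by
  rw [← boxInt_const]; exact boxInt_mono (Ker.const c) hf hS hT h

lemma boxInt_nonneg {f : ℝ → ℝ → ℝ} (hf : IsGraphon f) {S T : Set ℝ} (hS : USet S)
    (hT : USet T) : 0 ≤ boxInt f S T := by
  simpa using le_boxInt hf.ker hS hT (c := 0) fun x hx y hy => (hf.2.2 x y (hS.2 hx) (hT.2 hy)).1

lemma boxInt_le_mul {f : ℝ → ℝ → ℝ} (hf : IsGraphon f) {S T : Set ℝ} (hS : USet S)
    (hT : USet T) : boxInt f S T ≤ volume.real S * volume.real T := by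
  simpa using boxInt_le hf.ker hS hT (c := 1) fun x hx y hy => (hf.2.2 x y (hS.2 hx) (hT.2 hy)).2

lemma boxInt_sub_abs_le {f g : ℝ → ℝ → ℝ} (hf : IsGraphon f) (hg : IsGraphon g) {S T : Set ℝ}
    (hS : USet S) (hT : USet T) :
    |boxInt (fun x y => f x y - g x y) S T| ≤ volume.real S * volume.real T := by
  rw [boxInt_sub hf.ker hg.ker hS hT, abs_le]
  have h1 := boxInt_nonneg hf hS hT
  have h2 := boxInt_nonneg hg hS hT
  have h3 := boxInt_le_mul hf hS hT
  have h4 := boxInt_le_mul hg hS hT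
  constructor <;> linarith

lemma boxInt_sub_abs_le_one {f g : ℝ → ℝ → ℝ} (hf : IsGraphon f) (hg : IsGraphon g) {S T : Set ℝ}
    (hS : USet S) (hT : USet T) :
    |boxInt (fun x y => f x y - g x y) S T| ≤ 1 :=
  (boxInt_sub_abs_le hf hg hS hT).trans
    (mul_le_one₀ hS.real_le measureReal_nonneg hT.real_le)

/-- A box integral splits along finite families of disjoint sets that exhaust each side up to
null sets. -/
lemma boxInt_sum {f : ℝ → ℝ → ℝ} (hf : Ker f) {ι κ : Type*} (s : Finset ι) (t : Finset κ)
    {A : ι → Set ℝ} {B : κ → Set ℝ} {S T : Set ℝ}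
    (hA : ∀ i, USet (A i)) (hB : ∀ j, USet (B j))
    (dA : Pairwise (Function.onFun Disjoint A)) (dB : Pairwise (Function.onFun Disjoint B))
    (hSA : S =ᵐ[volume] ⋃ i ∈ s, A i) (hTB : T =ᵐ[volume] ⋃ j ∈ t, B j) :
    boxInt f S T = ∑ i ∈ s, ∑ j ∈ t, boxInt f (A i) (B j) := by
  have hin : ∀ x ∈ Icc (0:ℝ) 1, ∫ y in T, f x y = ∑ j ∈ t, ∫ y in B j, f x y := by
    intro x hx
    rw [setIntegral_congr_set hTB]
    exact integral_biUnion_finset t (fun j _ => (hB j).1) (dB.set_pairwise _)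
      fun j _ => hf.inner (hB j) hx
  have hpiece : ∀ i, ∫ x in A i, ∫ y in T, f x y = ∑ j ∈ t, boxInt f (A i) (B j) := by
    intro i
    rw [setIntegral_congr_fun (hA i).1 fun x hx => hin x ((hA i).2 hx)]
    exact integral_finsetSum _ fun j _ => hf.outer (hA i) (hB j)
  have hFi : ∀ i, IntegrableOn (fun x => ∫ y in T, f x y) (A i) := by
    intro i
    refine IntegrableOn.congr_fun (f := fun x => ∑ j ∈ t, ∫ y in B j, f x y) ?_
      (fun x hx => (hin x ((hA i).2 hx)).symm) (hA i).1
    exact integrable_finsetSum _ fun j _ => hf.outer (hA i) (hB j)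
  unfold boxInt
  rw [setIntegral_congr_set hSA, integral_biUnion_finset s (fun i _ => (hA i).1)
    (dA.set_pairwise _) fun i _ => hFi i]
  exact Finset.sum_congr rfl fun i _ => hpiece i

/-! ### Cut norm and cut distance -/

lemma abs_boxInt_le_cutNorm {f g : ℝ → ℝ → ℝ} (hf : IsGraphon f) (hg : IsGraphon g)
    {S T : Set ℝ} (hS : USet S) (hT : USet T) :
    |boxInt (fun x y => f x y - g x y) S T| ≤ cutNorm (fun x y => f x y - g x y) := by
  refine le_csSup ⟨1, ?_⟩ ⟨S, T, hS.1, hT.1, hS.2, hT.2, rfl⟩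
  rintro r ⟨S, T, h1, h2, h3, h4, rfl⟩
  exact boxInt_sub_abs_le_one hf hg ⟨h1, h3⟩ ⟨h2, h4⟩

lemma cutNorm_le {D : ℝ → ℝ → ℝ} {η : ℝ} (hη : 0 ≤ η) (h : CutLE D η) : cutNorm D ≤ η := by
  refine Real.sSup_le ?_ hη
  rintro r ⟨S, T, h1, h2, h3, h4, rfl⟩
  exact h S T ⟨h1, h3⟩ ⟨h2, h4⟩

lemma cutNorm_nonneg (D : ℝ → ℝ → ℝ) : 0 ≤ cutNorm D := by
  refine Real.sSup_nonneg ?_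
  rintro r ⟨S, T, -, -, -, -, rfl⟩
  exact abs_nonneg _

lemma cutDist_nonneg (u w : ℝ → ℝ → ℝ) : 0 ≤ cutDist u w := by
  refine Real.sInf_nonneg ?_
  rintro r ⟨φ, -, -, rfl⟩
  exact cutNorm_nonneg _

/-- Measure-preserving bijections of the unit interval, as used in `cutDist`. -/
def IsRearr (φ : ℝ → ℝ) : Prop :=
  MeasurePreserving φ (volume.restrict (Icc 0 1)) (volume.restrict (Icc 0 1)) ∧
    Set.BijOn φ (Icc 0 1) (Icc 0 1)

lemma IsGraphon.comp {f : ℝ → ℝ → ℝ} (hf : IsGraphon f) {φ : ℝ → ℝ} (hφ : IsRearr φ) :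
    IsGraphon (fun x y => f (φ x) (φ y)) :=
  ⟨(hf.ker.comp hφ.1.measurable hφ.2.mapsTo).1, fun _ _ => hf.2.1 _ _,
    fun _ _ hx hy => hf.2.2 _ _ (hφ.2.mapsTo hx) (hφ.2.mapsTo hy)⟩

lemma cutDist_le {u w : ℝ → ℝ → ℝ} {η : ℝ} (hη : 0 ≤ η) {φ : ℝ → ℝ} (hφ : IsRearr φ)
    (h : CutLE (fun x y => u (φ x) (φ y) - w x y) η) : cutDist u w ≤ η := by
  unfold cutDist
  refine le_trans (csInf_le ⟨0, ?_⟩ ⟨φ, hφ.1, hφ.2, rfl⟩) (cutNorm_le hη h)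
  rintro r ⟨φ, -, -, rfl⟩
  exact cutNorm_nonneg _

lemma exists_of_cutDist_lt {u w : ℝ → ℝ → ℝ} (hu : IsGraphon u) (hw : IsGraphon w) {η : ℝ}
    (h : cutDist u w < η) :
    ∃ φ, IsRearr φ ∧ CutLE (fun x y => u (φ x) (φ y) - w x y) η := by
  unfold cutDist at h
  obtain ⟨r, ⟨φ, h1, h2, rfl⟩, hr⟩ := exists_lt_of_csInf_lt
    (by exact ⟨_, id, MeasurePreserving.id _, Set.bijOn_id _, rfl⟩) h
  exact ⟨φ, ⟨h1, h2⟩, fun S T hS hT =>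
    (abs_boxInt_le_cutNorm (hu.comp ⟨h1, h2⟩) hw hS hT).trans hr.le⟩

/-- Box integrals are transported by rearrangements. The image of a measurable set under an
injective measurable map is measurable by the Lusin–Souslin theorem. -/
lemma boxInt_comp {f : ℝ → ℝ → ℝ} (hf : Ker f) {φ : ℝ → ℝ} (hφ : IsRearr φ) {S T : Set ℝ}
    (hS : USet S) (hT : USet T) :
    USet (φ '' S) ∧ USet (φ '' T) ∧
      boxInt (fun x y => f (φ x) (φ y)) S T = boxInt f (φ '' S) (φ '' T) := by
  have him : ∀ {S : Set ℝ}, USet S → USet (φ '' S) := fun {S} hS =>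
    ⟨hS.1.image_of_measurable_injOn hφ.1.measurable (hφ.2.injOn.mono hS.2),
      (image_mono hS.2).trans hφ.2.image_eq.subset⟩
  have key : ∀ {S : Set ℝ}, USet S → ∀ g : ℝ → ℝ, IntegrableOn g (φ '' S) →
      ∫ x in φ '' S, g x = ∫ x in S, g (φ x) := by
    intro S hS g hg
    have e1 : ∫ x in φ '' S, g x
        = ∫ x, (φ '' S).indicator g x ∂(volume.restrict (Icc (0:ℝ) 1)) := by
      rw [integral_indicator (him hS).1, Measure.restrict_restrict (him hS).1,
        inter_eq_self_of_subset_left (him hS).2]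
    have e2 : ∫ x in S, g (φ x)
        = ∫ x, S.indicator (fun x => g (φ x)) x ∂(volume.restrict (Icc (0:ℝ) 1)) := by
      rw [integral_indicator hS.1, Measure.restrict_restrict hS.1,
        inter_eq_self_of_subset_left hS.2]
    rw [e1, e2]
    have e3 : ∫ x, (φ '' S).indicator g x ∂(volume.restrict (Icc (0:ℝ) 1))
        = ∫ x, (φ '' S).indicator g x ∂(Measure.map φ (volume.restrict (Icc (0:ℝ) 1))) := by
      rw [hφ.1.map_eq]
    rw [e3, integral_map hφ.1.measurable.aemeasurable]
    · refine setIntegral_congr_fun measurableSet_Icc fun x hx => ?_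
      by_cases hxS : x ∈ S
      · rw [indicator_of_mem hxS, indicator_of_mem (mem_image_of_mem φ hxS)]
      · rw [indicator_of_notMem hxS, indicator_of_notMem]
        rintro ⟨y, hy, hyx⟩
        exact hxS (hφ.2.injOn (hS.2 hy) hx hyx ▸ hy)
    · rw [hφ.1.map_eq]
      refine AEStronglyMeasurable.mono_measure ?_ Measure.restrict_le_self
      exact ((integrable_indicator_iff (him hS).1).2 hg).aestronglyMeasurable
  refine ⟨him hS, him hT, ?_⟩
  unfold boxInt
  rw [key hS _ (hf.outer (him hS) (him hT))]
  refine setIntegral_congr_fun hS.1 fun x hx => ?_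
  exact (key hT _ (hf.inner (him hT) (hφ.2.mapsTo (hS.2 hx)))).symm

lemma CutLE.comp {f g : ℝ → ℝ → ℝ} (hf : Ker f) (hg : Ker g) {φ : ℝ → ℝ} (hφ : IsRearr φ) {η : ℝ}
    (h : CutLE (fun x y => f x y - g x y) η) :
    CutLE (fun x y => f (φ x) (φ y) - g (φ x) (φ y)) η := by
  intro S T hS hT
  obtain ⟨h1, h2, h3⟩ := boxInt_comp (hf.sub hg) hφ hS hT
  rw [h3]; exact h _ _ h1 h2

/-! ### The functional `Γ` -/

/-- The integrand in the definition of `Γ(w, A)`. -/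
noncomputable def gammaKer (w : ℝ → ℝ → ℝ) (A : Set ℝ) (y z : ℝ) : ℝ :=
  if y < z then
    max (∫ x in A ∩ Icc 0 y, (w x z - w x y)) 0
      + max (∫ x in A ∩ Icc z 1, (w x y - w x z)) 0
  else 0

lemma gammaA_eq (w : ℝ → ℝ → ℝ) (A : Set ℝ) :
    gammaA w A = boxInt (gammaKer w A) (Icc 0 1) (Icc 0 1) := rfl

lemma measurable_section_integral {q : ℝ × ℝ → ℝ → ℝ} (hq : Measurable (Function.uncurry q))
    {B : Set ((ℝ × ℝ) × ℝ)} (hB : MeasurableSet B) :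
    Measurable fun p => ∫ x in {x | (p, x) ∈ B}, q p x := by
  have h1 : (fun p => ∫ x in {x | (p, x) ∈ B}, q p x)
      = fun p => ∫ x, B.indicator (Function.uncurry q) (p, x) := by
    funext p
    exact (integral_indicator (f := q p) (μ := volume)
      (measurable_prodMk_left hB : MeasurableSet {x | (p, x) ∈ B})).symm
  rw [h1]
  exact ((hq.indicator hB).stronglyMeasurable.integral_prod_right').measurable

lemma USet.inter_Icc_left {A : Set ℝ} (hA : USet A) (a b : ℝ) : USet (A ∩ Icc a b) :=
  hA.inter measurableSet_Icc

lemma abs_integral_sub_le {w : ℝ → ℝ → ℝ} (hw : IsGraphon w) {B : Set ℝ} (hB : USet B)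
    {y z : ℝ} (hy : y ∈ Icc (0:ℝ) 1) (hz : z ∈ Icc (0:ℝ) 1) :
    |∫ x in B, (w x z - w x y)| ≤ 1 := by
  have := norm_setIntegral_le_of_norm_le_const (C := 1) (f := fun x => w x z - w x y)
    hB.lt_top (fun x hx => by
      have h1 := hw.2.2 x y (hB.2 hx) hy
      have h2 := hw.2.2 x z (hB.2 hx) hz
      rw [Real.norm_eq_abs, abs_le]
      constructor <;> linarith [h1.1, h1.2, h2.1, h2.2])
  exact this.trans (by linarith [hB.real_le])

lemma gammaKer_nonneg (w : ℝ → ℝ → ℝ) (A : Set ℝ) (y z : ℝ) : 0 ≤ gammaKer w A y z := by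
  unfold gammaKer
  split_ifs
  · positivity
  · exact le_rfl

lemma gammaKer_le {w : ℝ → ℝ → ℝ} (hw : IsGraphon w) {A : Set ℝ} (hA : USet A)
    {y z : ℝ} (hy : y ∈ Icc (0:ℝ) 1) (hz : z ∈ Icc (0:ℝ) 1) : gammaKer w A y z ≤ 2 := by
  unfold gammaKer
  split_ifs
  · have h1 := abs_integral_sub_le hw (hA.inter_Icc_left 0 y) hy hz
    have h2 := abs_integral_sub_le hw (hA.inter_Icc_left z 1) hz hy
    have h3 := max_le (le_of_abs_le h1) zero_le_one
    have h4 := max_le (le_of_abs_le h2) zero_le_one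
    linarith
  · norm_num

lemma gammaKer_ker {w : ℝ → ℝ → ℝ} (hw : IsGraphon w) {A : Set ℝ} (hA : USet A) :
    Ker (gammaKer w A) := by
  refine ⟨?_, 2, fun y hy z hz => ?_⟩
  · have hw1 := hw.1
    have m1 : Measurable fun q : (ℝ × ℝ) × ℝ => w q.2 q.1.2 :=
      hw1.comp (measurable_snd.prodMk (measurable_snd.comp measurable_fst))
    have m2 : Measurable fun q : (ℝ × ℝ) × ℝ => w q.2 q.1.1 :=
      hw1.comp (measurable_snd.prodMk (measurable_fst.comp measurable_fst))
    have hAm := hA.1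
    have e1 := measurable_section_integral (q := fun p x => w x p.2 - w x p.1) (m1.sub m2)
      (B := {q | q.2 ∈ A ∧ 0 ≤ q.2 ∧ q.2 ≤ q.1.1})
      ((measurable_snd hAm).inter ((measurableSet_le measurable_const measurable_snd).inter
        (measurableSet_le measurable_snd (measurable_fst.comp measurable_fst))))
    have e2 := measurable_section_integral (q := fun p x => w x p.1 - w x p.2) (m2.sub m1)
      (B := {q | q.2 ∈ A ∧ q.1.2 ≤ q.2 ∧ q.2 ≤ 1})
      ((measurable_snd hAm).inter ((measurableSet_le (measurable_snd.comp measurable_fst)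
        measurable_snd).inter (measurableSet_le measurable_snd measurable_const)))
    exact Measurable.ite (measurableSet_lt measurable_fst measurable_snd)
      ((e1.max measurable_const).add (e2.max measurable_const)) measurable_const
  · rw [abs_of_nonneg (gammaKer_nonneg _ _ _ _)]
    exact gammaKer_le hw hA hy hz

lemma gammaA_nonneg (w : ℝ → ℝ → ℝ) (A : Set ℝ) : 0 ≤ gammaA w A :=
  integral_nonneg fun _ => integral_nonneg fun _ => gammaKer_nonneg _ _ _ _

lemma Gamma_nonneg (w : ℝ → ℝ → ℝ) : 0 ≤ Gamma w := by
  refine Real.sSup_nonneg ?_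
  rintro r ⟨A, -, -, rfl⟩
  exact gammaA_nonneg _ _

lemma gammaA_le_Gamma {w : ℝ → ℝ → ℝ} (hw : IsGraphon w) {A : Set ℝ} (hA : USet A) :
    gammaA w A ≤ Gamma w := by
  refine le_csSup ⟨2, ?_⟩ ⟨A, hA.1, hA.2, rfl⟩
  rintro r ⟨A, h1, h2, rfl⟩
  rw [gammaA_eq]
  have := boxInt_le (gammaKer_ker hw ⟨h1, h2⟩) USet.unit USet.unit (c := 2)
    fun y hy z hz => gammaKer_le hw ⟨h1, h2⟩ hy hz
  simpa using this

/-- `X` lies strictly to the left of `Y`. -/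
def SetLT (X Y : Set ℝ) : Prop := ∀ x ∈ X, ∀ y ∈ Y, x < y

lemma boxInt_const_left (g : ℝ → ℝ) (S T : Set ℝ) :
    boxInt (fun _ z => g z) S T = volume.real S * ∫ z in T, g z := by
  simp [boxInt]

lemma boxInt_const_right (g : ℝ → ℝ) (S T : Set ℝ) :
    boxInt (fun y _ => g y) S T = volume.real T * ∫ y in S, g y := by
  simp [boxInt, integral_const_mul]

lemma Ker.swap_outer {w : ℝ → ℝ → ℝ} (hw : IsGraphon w) {X : Set ℝ} (hX : USet X) :
    Ker (fun y _ => ∫ x in X, w x y) ∧ Ker (fun _ y => ∫ x in X, w x y) := by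
  have hm : Measurable fun y => ∫ x in X, w x y := by
    have := (hw.1.stronglyMeasurable.integral_prod_left (μ := volume.restrict X))
    exact this.measurable
  have hb : ∀ y ∈ Icc (0:ℝ) 1, |∫ x in X, w x y| ≤ 1 := by
    intro y hy
    have := norm_setIntegral_le_of_norm_le_const (C := 1) (f := fun x => w x y)
      hX.lt_top (fun x hx => by
        have h1 := hw.2.2 x y (hX.2 hx) hy
        rw [Real.norm_eq_abs, abs_of_nonneg h1.1]; exact h1.2)
    exact this.trans (by linarith [hX.real_le])
  exact ⟨⟨hm.comp measurable_fst, 1, fun y hy _ _ => hb y hy⟩,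
    ⟨hm.comp measurable_snd, 1, fun _ _ y hy => hb y hy⟩⟩

/-- Testing `Γ` with the left-most of three consecutive sets. -/
lemma Gamma_left {w : ℝ → ℝ → ℝ} (hw : IsGraphon w) {X Y Z : Set ℝ} (hX : USet X) (hY : USet Y)
    (hZ : USet Z) (hXY : SetLT X Y) (hYZ : SetLT Y Z) :
    volume.real Y * boxInt w X Z ≤ volume.real Z * boxInt w X Y + Gamma w := by
  obtain ⟨k1, k2⟩ := Ker.swap_outer hw hX
  have h1 : boxInt (fun y z => (∫ x in X, w x z) - ∫ x in X, w x y) Y Z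
      = volume.real Y * boxInt w X Z - volume.real Z * boxInt w X Y := by
    rw [boxInt_sub k2 k1 hY hZ, boxInt_const_left, boxInt_const_right,
      boxInt_comm hw.ker hw.2.1 hX hZ, boxInt_comm hw.ker hw.2.1 hX hY]
    unfold boxInt
    simp_rw [hw.2.1]
  have h2 : boxInt (fun y z => (∫ x in X, w x z) - ∫ x in X, w x y) Y Z
      ≤ boxInt (gammaKer w X) Y Z := by
    refine boxInt_mono (k2.sub k1) (gammaKer_ker hw hX) hY hZ fun y hy z hz => ?_
    have hXy : X ∩ Icc 0 y = X :=
      inter_eq_left.2 fun x hx => ⟨(hX.2 hx).1, (hXY x hx y hy).le⟩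
    have i1 : IntegrableOn (fun x => w x z) X := by
      simpa only [hw.2.1] using hw.ker.inner hX (hZ.2 hz)
    have i2 : IntegrableOn (fun x => w x y) X := by
      simpa only [hw.2.1] using hw.ker.inner hX (hY.2 hy)
    rw [gammaKer, if_pos (hYZ y hy z hz), hXy, integral_sub i1 i2]
    exact (le_max_left _ _).trans (le_add_of_nonneg_right (le_max_right _ _))
  have h3 : boxInt (gammaKer w X) Y Z ≤ gammaA w X :=
    boxInt_mono_set (gammaKer_ker hw hX) hY hZ USet.unit USet.unit hY.2 hZ.2
      fun y _ z _ => gammaKer_nonneg _ _ _ _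
  have h4 := gammaA_le_Gamma hw hX
  linarith

/-- Testing `Γ` with the right-most of three consecutive sets. -/
lemma Gamma_right {w : ℝ → ℝ → ℝ} (hw : IsGraphon w) {X Y Z : Set ℝ} (hX : USet X) (hY : USet Y)
    (hZ : USet Z) (hXY : SetLT X Y) (hYZ : SetLT Y Z) :
    volume.real Y * boxInt w X Z ≤ volume.real X * boxInt w Y Z + Gamma w := by
  obtain ⟨k1, k2⟩ := Ker.swap_outer hw hZ
  have h1 : boxInt (fun y z => (∫ x in Z, w x y) - ∫ x in Z, w x z) X Y
      = volume.real Y * boxInt w X Z - volume.real X * boxInt w Y Z := by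
    rw [boxInt_sub k1 k2 hX hY, boxInt_const_left, boxInt_const_right]
    unfold boxInt
    simp_rw [hw.2.1]
  have h2 : boxInt (fun y z => (∫ x in Z, w x y) - ∫ x in Z, w x z) X Y
      ≤ boxInt (gammaKer w Z) X Y := by
    refine boxInt_mono (k1.sub k2) (gammaKer_ker hw hZ) hX hY fun y hy z hz => ?_
    have hXy : Z ∩ Icc z 1 = Z :=
      inter_eq_left.2 fun x hx => ⟨(hYZ z hz x hx).le, (hZ.2 hx).2⟩
    have i1 : IntegrableOn (fun x => w x z) Z := by
      simpa only [hw.2.1] using hw.ker.inner hZ (hY.2 hz)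
    have i2 : IntegrableOn (fun x => w x y) Z := by
      simpa only [hw.2.1] using hw.ker.inner hZ (hX.2 hy)
    rw [gammaKer, if_pos (hXY y hy z hz), hXy, integral_sub i2 i1]
    exact (le_max_left _ _).trans (le_add_of_nonneg_left (le_max_right _ _))
  have h3 : boxInt (gammaKer w Z) X Y ≤ gammaA w Z :=
    boxInt_mono_set (gammaKer_ker hw hZ) hX hY USet.unit USet.unit hX.2 hY.2
      fun y _ z _ => gammaKer_nonneg _ _ _ _
  have h4 := gammaA_le_Gamma hw hZ
  linarith

/-! ### Kernels close to a Robinson graphon have small `Γ` -/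

lemma integrableOn_abs {D : ℝ → ℝ → ℝ} (hD : Ker D) {B : Set ℝ} (hB : USet B) :
    IntegrableOn (fun y => |∫ x in B, D y x|) (Icc 0 1) :=
  (hD.outer USet.unit hB).abs

lemma integral_abs_le {D : ℝ → ℝ → ℝ} (hD : Ker D) {η : ℝ} (h : CutLE D η) {B : Set ℝ}
    (hB : USet B) : ∫ y in Icc (0:ℝ) 1, |∫ x in B, D y x| ≤ 2 * η := by
  have hm : Measurable fun y => ∫ x in B, D y x :=
    (hD.1.stronglyMeasurable.integral_prod_right (ν := volume.restrict B)).measurable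
  set P : Set ℝ := {y | 0 ≤ ∫ x in B, D y x} with hP
  have hPm : MeasurableSet P := measurableSet_le measurable_const hm
  have hi := integrableOn_abs hD hB
  have u1 : USet (Icc (0:ℝ) 1 ∩ P) := USet.unit.inter hPm
  have u2 : USet (Icc (0:ℝ) 1 ∩ Pᶜ) := USet.unit.inter hPm.compl
  have e := setIntegral_union (μ := volume) (f := fun y => |∫ x in B, D y x|)
    (s := Icc (0:ℝ) 1 ∩ P) (t := Icc (0:ℝ) 1 ∩ Pᶜ)
    (disjoint_compl_right.mono inter_subset_right inter_subset_right) u2.1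
    (hi.mono_set inter_subset_left) (hi.mono_set inter_subset_left)
  rw [inter_union_compl] at e
  rw [e]
  have e1 : ∫ y in Icc (0:ℝ) 1 ∩ P, |∫ x in B, D y x| = boxInt D (Icc (0:ℝ) 1 ∩ P) B :=
    setIntegral_congr_fun u1.1 fun y hy => abs_of_nonneg hy.2
  have e2 : ∫ y in Icc (0:ℝ) 1 ∩ Pᶜ, |∫ x in B, D y x| = - boxInt D (Icc (0:ℝ) 1 ∩ Pᶜ) B := by
    unfold boxInt
    rw [← integral_neg]
    exact setIntegral_congr_fun u2.1 fun y hy => abs_of_neg (not_le.1 hy.2)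
  rw [e1, e2]
  have h1 := (abs_le.1 (h _ _ u1 hB)).2
  have h2 := (abs_le.1 (h _ _ u2 hB)).1
  linarith

lemma abs_integral_le_of_subset {f g : ℝ → ℝ → ℝ} (hf : IsGraphon f) (hg : IsGraphon g)
    {B B' E : Set ℝ} (hB : USet B) (hE : USet E) (hd : Disjoint B E) (hu : B' = B ∪ E) {δ : ℝ}
    (hδ : volume.real E ≤ δ) {t : ℝ} (ht : t ∈ Icc (0:ℝ) 1) :
    |∫ x in B', (f t x - g t x)| ≤ |∫ x in B, (f t x - g t x)| + δ := by
  have k := hf.ker.sub hg.ker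
  rw [hu, setIntegral_union hd hE.1 (k.inner hB ht) (k.inner hE ht)]
  refine (abs_add_le _ _).trans (add_le_add le_rfl ?_)
  have := norm_setIntegral_le_of_norm_le_const (C := 1) (f := fun x => f t x - g t x)
    hE.lt_top (fun x hx => by
      have h1 := hf.2.2 t x ht (hE.2 hx)
      have h2 := hg.2.2 t x ht (hE.2 hx)
      rw [Real.norm_eq_abs, abs_le]
      constructor <;> linarith [h1.1, h1.2, h2.1, h2.2])
  rw [Real.norm_eq_abs] at this
  linarith

/-- If `g` is Robinson and `‖f - g‖_□ ≤ η`, then `Γ(f) = O(kη + 1/k)` for every `k`. The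
moving end points `y`, `z` of the domains in `Γ` are rounded to multiples of `1/k`. -/
lemma Gamma_le_of_cutLE {f g : ℝ → ℝ → ℝ} (hf : IsGraphon f) (hg : IsGraphon g)
    (hR : IsRobinson g) {η : ℝ} (hη : 0 ≤ η) (h : CutLE (fun x y => f x y - g x y) η)
    {k : ℕ} (hk : 0 < k) : Gamma f ≤ 8 * (k + 1) * η + 4 / k := by
  have hk' : (0:ℝ) < k := by exact_mod_cast hk
  refine Real.sSup_le ?_ (by positivity)
  rintro r ⟨A, hA1, hA2, rfl⟩
  have hA : USet A := ⟨hA1, hA2⟩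
  have kD := hf.ker.sub hg.ker
  set φ : Set ℝ → ℝ → ℝ := fun B t => |∫ x in B, (f t x - g t x)| with hφ
  set L : ℕ → Set ℝ := fun i => A ∩ Icc 0 (i / k : ℝ) with hL
  set R : ℕ → Set ℝ := fun i => A ∩ Icc (i / k : ℝ) 1 with hRR
  have uL : ∀ i, USet (L i) := fun i => hA.inter_Icc_left _ _
  have uR : ∀ i, USet (R i) := fun i => hA.inter_Icc_left _ _
  set F : ℝ → ℝ := fun t => ∑ i ∈ Finset.range (k + 1), (φ (L i) t + φ (R i) t) + 2 / k with hF
  have hpair : ∀ i, IntegrableOn (fun t => φ (L i) t + φ (R i) t) (Icc 0 1) := fun i =>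
    (integrableOn_abs kD (uL i)).add (integrableOn_abs kD (uR i))
  have hpairs : IntegrableOn
      (fun t => ∑ i ∈ Finset.range (k + 1), (φ (L i) t + φ (R i) t)) (Icc 0 1) :=
    integrable_finsetSum _ fun i _ => hpair i
  have hFint : IntegrableOn F (Icc 0 1) := hpairs.add (integrable_const _)
  have hFI : ∫ t in Icc (0:ℝ) 1, F t ≤ 4 * (k + 1) * η + 2 / k := by
    simp only [hF]
    rw [integral_add hpairs (integrable_const _), integral_finsetSum _ fun i _ => hpair i]
    have : ∀ i ∈ Finset.range (k + 1), ∫ t in Icc (0:ℝ) 1, (φ (L i) t + φ (R i) t) ≤ 4 * η := by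
      intro i _
      rw [integral_add (integrableOn_abs kD (uL i)) (integrableOn_abs kD (uR i))]
      have h1 := integral_abs_le kD h (uL i)
      have h2 := integral_abs_le kD h (uR i)
      linarith
    have h3 := Finset.sum_le_sum this
    simp only [Finset.sum_const, Finset.card_range, nsmul_eq_mul] at h3
    push_cast at h3
    simp only [integral_const, MeasurableSet.univ, measureReal_restrict_apply, univ_inter,
      Real.volume_real_Icc, sub_zero, smul_eq_mul]
    norm_num
    linarith
  have φnn : ∀ B t, 0 ≤ φ B t := fun _ _ => abs_nonneg _
  have roundL : ∀ y ∈ Icc (0:ℝ) 1, ∀ t ∈ Icc (0:ℝ) 1, φ (A ∩ Icc 0 y) t ≤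
      ∑ i ∈ Finset.range (k + 1), φ (L i) t + 1 / k := by
    intro y hy t ht
    set i := ⌊(k:ℝ) * y⌋₊ with hi
    have hky : 0 ≤ (k:ℝ) * y := mul_nonneg hk'.le hy.1
    have i1 : (i:ℝ) ≤ k * y := Nat.floor_le hky
    have i2 : (k:ℝ) * y < i + 1 := Nat.lt_floor_add_one _
    have i3 : i ∈ Finset.range (k + 1) := by
      rw [Finset.mem_range, Nat.lt_succ_iff]
      have : (i:ℝ) ≤ k := i1.trans (by nlinarith [hy.2])
      exact_mod_cast this
    have i4 : (i / k : ℝ) ≤ y := by rw [div_le_iff₀ hk']; linarith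
    have hE : volume.real (A ∩ Ioc (i / k : ℝ) y) ≤ 1 / k := by
      refine (measureReal_mono inter_subset_right (by simp)).trans ?_
      rw [Real.volume_real_Ioc_of_le i4]
      have e : (k:ℝ) * (y - i / k) = k * y - i := by field_simp
      rw [le_div_iff₀ hk']
      nlinarith
    have := abs_integral_le_of_subset hf hg (B' := A ∩ Icc 0 y) (uL i)
      (hA.inter measurableSet_Ioc) ?_ ?_ hE ht
    · refine this.trans (add_le_add ?_ le_rfl)
      exact Finset.single_le_sum (f := fun i => φ (L i) t) (fun j _ => φnn _ _) i3
    · rw [Set.disjoint_left]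
      rintro x hx hx'
      exact absurd hx'.2.1 (not_lt.2 hx.2.2)
    · rw [hL]
      simp only
      rw [← inter_union_distrib_left, Icc_union_Ioc_eq_Icc (by positivity) i4]
  have roundR : ∀ z ∈ Icc (0:ℝ) 1, ∀ t ∈ Icc (0:ℝ) 1, φ (A ∩ Icc z 1) t ≤
      ∑ i ∈ Finset.range (k + 1), φ (R i) t + 1 / k := by
    intro y hy t ht
    set i := ⌈(k:ℝ) * y⌉₊ with hi
    have hky : 0 ≤ (k:ℝ) * y := mul_nonneg hk'.le hy.1
    have i1 : (k:ℝ) * y ≤ i := Nat.le_ceil _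
    have i2 : (i:ℝ) < k * y + 1 := Nat.ceil_lt_add_one hky
    have i3' : i ≤ k := Nat.ceil_le.2 (by nlinarith [hy.2])
    have i3 : i ∈ Finset.range (k + 1) := by
      rw [Finset.mem_range, Nat.lt_succ_iff]; exact i3'
    have i5 : (i / k : ℝ) ≤ 1 := by rw [div_le_one hk']; exact_mod_cast i3'
    have i4 : y ≤ (i / k : ℝ) := by rw [le_div_iff₀ hk']; linarith
    have hE : volume.real (A ∩ Ico y (i / k : ℝ)) ≤ 1 / k := by
      refine (measureReal_mono inter_subset_right (by simp)).trans ?_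
      rw [Real.volume_real_Ico_of_le i4]
      have e : (k:ℝ) * (i / k - y) = i - k * y := by field_simp
      rw [le_div_iff₀ hk']
      nlinarith
    have := abs_integral_le_of_subset hf hg (B' := A ∩ Icc y 1) (uR i)
      (hA.inter measurableSet_Ico) ?_ ?_ hE ht
    · refine this.trans (add_le_add ?_ le_rfl)
      exact Finset.single_le_sum (f := fun i => φ (R i) t) (fun j _ => φnn _ _) i3
    · rw [Set.disjoint_left]
      rintro x hx hx'
      exact absurd hx'.2.2 (not_lt.2 hx.2.1)
    · rw [hRR]
      simp only
      rw [← inter_union_distrib_left, union_comm, Ico_union_Icc_eq_Icc i4 i5]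
  -- The Robinson property makes the contribution of `g` to each inner integral nonpositive.
  have diff : ∀ B, USet B → ∀ s ∈ Icc (0:ℝ) 1, ∀ t ∈ Icc (0:ℝ) 1,
      (∀ x ∈ B, g x s ≤ g x t) → ∫ x in B, (f x s - f x t) ≤ φ B s + φ B t := by
    intro B hB s hs t ht hle
    have e1 : ∀ x, f x s - f x t = f s x - f t x := fun x => by rw [hf.2.1 x s, hf.2.1 x t]
    simp_rw [e1]
    have h1 : ∫ x in B, (f s x - f t x) ≤
        ∫ x in B, ((f s x - g s x) - (f t x - g t x)) := by
      refine setIntegral_mono_on ((hf.ker.inner hB hs).sub (hf.ker.inner hB ht))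
        ((kD.inner hB hs).sub (kD.inner hB ht)) hB.1 fun x hx => ?_
      have := hle x hx
      rw [hg.2.1 x s, hg.2.1 x t] at this
      linarith
    rw [integral_sub (kD.inner hB hs) (kD.inner hB ht)] at h1
    have h2 := le_abs_self (∫ x in B, (f s x - g s x))
    have h3 := neg_abs_le (∫ x in B, (f t x - g t x))
    simp only [hφ]
    linarith
  have ptw : ∀ y ∈ Icc (0:ℝ) 1, ∀ z ∈ Icc (0:ℝ) 1, gammaKer f A y z ≤ F y + F z := by
    intro y hy z hz
    have hsum : ∀ t, F t = ∑ i ∈ Finset.range (k + 1), φ (L i) t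
        + ∑ i ∈ Finset.range (k + 1), φ (R i) t + (1 / k + 1 / k) := by
      intro t; simp only [hF, Finset.sum_add_distrib]; ring
    have hFnn : ∀ t, 0 ≤ F t := fun t =>
      add_nonneg (Finset.sum_nonneg fun i _ => add_nonneg (φnn _ _) (φnn _ _)) (by positivity)
    unfold gammaKer
    split_ifs with hyz
    · have a1 := diff (A ∩ Icc 0 y) (hA.inter_Icc_left _ _) z hz y hy fun x hx =>
        (hR x y z hx.2.1 hx.2.2 hyz.le hz.2).trans (min_le_left _ _)
      have a2 := diff (A ∩ Icc z 1) (hA.inter_Icc_left _ _) y hy z hz fun x hx => by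
        rw [hg.2.1 x y, hg.2.1 x z]
        exact (hR y z x hy.1 hyz.le hx.2.1 hx.2.2).trans (min_le_right _ _)
      have b1 := roundL y hy y hy
      have b2 := roundL y hy z hz
      have b3 := roundR z hz y hy
      have b4 := roundR z hz z hz
      rw [hsum y, hsum z]
      have c1 : max (∫ x in A ∩ Icc 0 y, (f x z - f x y)) 0
          ≤ φ (A ∩ Icc 0 y) z + φ (A ∩ Icc 0 y) y :=
        max_le a1 (add_nonneg (φnn _ _) (φnn _ _))
      have c2 : max (∫ x in A ∩ Icc z 1, (f x y - f x z)) 0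
          ≤ φ (A ∩ Icc z 1) y + φ (A ∩ Icc z 1) z :=
        max_le a2 (add_nonneg (φnn _ _) (φnn _ _))
      linarith
    · exact add_nonneg (hFnn _) (hFnn _)
  rw [gammaA_eq]
  have main : boxInt (gammaKer f A) (Icc 0 1) (Icc 0 1) ≤
      ∫ y in Icc (0:ℝ) 1, ∫ z in Icc (0:ℝ) 1, (F y + F z) := by
    refine setIntegral_mono_on ((gammaKer_ker hf hA).outer USet.unit USet.unit) ?_
      measurableSet_Icc fun y hy => ?_
    · have : ∀ y, ∫ z in Icc (0:ℝ) 1, (F y + F z) = F y + ∫ z in Icc (0:ℝ) 1, F z := by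
        intro y; rw [integral_add (integrable_const _) hFint]; simp
      simp_rw [this]
      exact hFint.add (integrable_const _)
    · exact setIntegral_mono_on ((gammaKer_ker hf hA).inner USet.unit hy)
        ((integrable_const _).add hFint) measurableSet_Icc fun z hz => ptw y hy z hz
  refine main.trans ?_
  have : ∀ y, ∫ z in Icc (0:ℝ) 1, (F y + F z) = F y + ∫ z in Icc (0:ℝ) 1, F z := by
    intro y; rw [integral_add (integrable_const _) hFint]; simp
  simp_rw [this]
  rw [integral_add hFint (integrable_const _)]
  simp only [integral_const, MeasurableSet.univ, measureReal_restrict_apply, univ_inter,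
      Real.volume_real_Icc, sub_zero, smul_eq_mul]
  norm_num
  have e4 : (4:ℝ) / k = 2 / k + 2 / k := by ring
  linarith

/-! ### Equipartitions of the unit interval -/

/-- The `i`-th of the `m` intervals of length `1/m`, half-open as in `vertexOf`. -/
def cell (m i : ℕ) : Set ℝ := Ioc ((i:ℝ) / m) ((i + 1) / m)

lemma measurableSet_cell (m i : ℕ) : MeasurableSet (cell m i) := measurableSet_Ioc

lemma cell_subset {m i : ℕ} (hi : i < m) : cell m i ⊆ Icc 0 1 := by
  have hm : (0:ℝ) < m := by exact_mod_cast (Nat.zero_le i).trans_lt hi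
  intro x hx
  refine ⟨(by positivity : (0:ℝ) ≤ i / m).trans hx.1.le, hx.2.trans ?_⟩
  rw [div_le_one hm]
  exact_mod_cast hi

lemma USet.cell {m i : ℕ} (hi : i < m) : USet (cell m i) :=
  ⟨measurableSet_cell m i, cell_subset hi⟩

lemma volume_cell {m i : ℕ} : volume.real (cell m i) = 1 / m := by
  unfold cell
  rw [Real.volume_real_Ioc_of_le (by gcongr; linarith)]
  ring

lemma cell_setLT {m i j j' : ℕ} (h : ((i:ℝ) + 1) / m ≤ j / j') :
    SetLT (cell m i) (cell j' j) := fun _ hx _ hy => hx.2.trans_lt (h.trans_lt hy.1)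

lemma cell_setLT' {m i j : ℕ} (h : i < j) : SetLT (cell m i) (cell m j) := by
  refine cell_setLT ?_
  gcongr
  exact_mod_cast h

lemma vertexOf_eq {m i : ℕ} (hm : 0 < m) {x : ℝ} (hx : x ∈ cell m i) : vertexOf m x = i := by
  have hm' : (0:ℝ) < m := by exact_mod_cast hm
  have h1 := hx.1
  have h2 := hx.2
  rw [div_lt_iff₀ hm'] at h1
  rw [le_div_iff₀ hm'] at h2
  have : ⌈(m:ℝ) * x⌉ = (i:ℤ) + 1 := by
    rw [Int.ceil_eq_iff]
    push_cast
    constructor <;> linarith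
  unfold vertexOf
  rw [this]
  simp

lemma cell_disjoint {m i j : ℕ} (hm : 0 < m) (h : i ≠ j) : Disjoint (cell m i) (cell m j) := by
  rw [Set.disjoint_left]
  intro x hx hx'
  exact h ((vertexOf_eq hm hx).symm.trans (vertexOf_eq hm hx'))

lemma vertexOf_lt {m : ℕ} (hm : 0 < m) {x : ℝ} (hx : x ≤ 1) : vertexOf m x < m := by
  have hm' : (0:ℝ) < m := by exact_mod_cast hm
  have : ⌈(m:ℝ) * x⌉ ≤ (m:ℤ) := by
    rw [Int.ceil_le]; push_cast; nlinarith
  unfold vertexOf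
  omega

lemma vertexOf_mono (m : ℕ) : Monotone (vertexOf m) := by
  intro x y h
  unfold vertexOf
  have : ⌈(m:ℝ) * x⌉ ≤ ⌈(m:ℝ) * y⌉ := Int.ceil_mono (by gcongr)
  omega

lemma mem_cell_vertexOf {m : ℕ} (hm : 0 < m) {x : ℝ} (hx : 0 < x) :
    x ∈ cell m (vertexOf m x) := by
  have hm' : (0:ℝ) < m := by exact_mod_cast hm
  have h1 : 0 < ⌈(m:ℝ) * x⌉ := Int.ceil_pos.2 (by positivity)
  have h2 : ((vertexOf m x : ℕ) : ℝ) = (⌈(m:ℝ) * x⌉ : ℝ) - 1 := by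
    have : ((vertexOf m x : ℕ) : ℤ) = ⌈(m:ℝ) * x⌉ - 1 := by unfold vertexOf; omega
    exact_mod_cast this
  have h3 := Int.le_ceil ((m:ℝ) * x)
  have h4 := Int.ceil_lt_add_one ((m:ℝ) * x)
  constructor
  · rw [div_lt_iff₀ hm', h2]; linarith
  · rw [le_div_iff₀ hm', h2]; linarith

lemma measurable_vertexOf (m : ℕ) : Measurable (vertexOf m) := (vertexOf_mono m).measurable

lemma ae_cells {m : ℕ} (hm : 0 < m) {φ : ℝ → ℝ} (hφ : InjOn φ (Icc 0 1))
    (hmaps : MapsTo φ (Icc 0 1) (Icc 0 1)) {S : Set ℝ} (hS : USet S) :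
    S =ᵐ[volume] ⋃ i ∈ Finset.range m, S ∩ φ ⁻¹' (cell m i) := by
  have h1 : (⋃ i ∈ Finset.range m, S ∩ φ ⁻¹' (cell m i)) ⊆ S :=
    iUnion₂_subset fun i _ => inter_subset_left
  refine (ae_le_set.2 ?_).antisymm h1.eventuallyLE
  have hsub : (S \ ⋃ i ∈ Finset.range m, S ∩ φ ⁻¹' (cell m i)).Subsingleton := by
    have hz : ∀ x ∈ S \ ⋃ i ∈ Finset.range m, S ∩ φ ⁻¹' (cell m i), φ x = 0 := by
      intro x hx
      by_contra hne
      have hx1 := hmaps (hS.2 hx.1)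
      have hpos : 0 < φ x := lt_of_le_of_ne hx1.1 (Ne.symm hne)
      exact hx.2 (mem_iUnion₂.2 ⟨vertexOf m (φ x), Finset.mem_range.2 (vertexOf_lt hm hx1.2),
        hx.1, mem_cell_vertexOf hm hpos⟩)
    intro x hx y hy
    exact hφ (hS.2 hx.1) (hS.2 hy.1) ((hz x hx).trans (hz y hy).symm)
  exact hsub.measure_zero _

lemma ae_cells_fin {m : ℕ} (hm : 0 < m) {φ : ℝ → ℝ} (hφ : InjOn φ (Icc 0 1))
    (hmaps : MapsTo φ (Icc 0 1) (Icc 0 1)) {S : Set ℝ} (hS : USet S) :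
    S =ᵐ[volume] ⋃ i ∈ (Finset.univ : Finset (Fin m)), S ∩ φ ⁻¹' (cell m i) := by
  have e : (⋃ i ∈ (Finset.univ : Finset (Fin m)), S ∩ φ ⁻¹' (cell m i))
      = ⋃ i ∈ Finset.range m, S ∩ φ ⁻¹' (cell m i) := by
    ext x
    simp only [mem_iUnion, Finset.mem_univ, exists_prop, true_and, Finset.mem_range,
      Fin.exists_iff]
  rw [e]
  exact ae_cells hm hφ hmaps hS

lemma real_sum_cells {m : ℕ} (hm : 0 < m) {φ : ℝ → ℝ} (hφ : InjOn φ (Icc 0 1))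
    (hφm : Measurable φ) (hmaps : MapsTo φ (Icc 0 1) (Icc 0 1)) {S : Set ℝ} (hS : USet S) :
    volume.real S = ∑ i ∈ Finset.range m, volume.real (S ∩ φ ⁻¹' (cell m i)) := by
  rw [measureReal_congr (ae_cells hm hφ hmaps hS)]
  refine measureReal_biUnion_finset (fun i _ j _ hij => ?_)
    (fun i _ => hS.1.inter (hφm (measurableSet_cell m i)))
    (fun i _ => (hS.inter (hφm (measurableSet_cell m i))).lt_top.ne)
  exact ((cell_disjoint hm hij).preimage φ).mono inter_subset_right inter_subset_right

lemma boxInt_cells {f : ℝ → ℝ → ℝ} (hf : Ker f) {m : ℕ} (hm : 0 < m) {S T : Set ℝ}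
    (hS : USet S) (hT : USet T) :
    boxInt f S T = ∑ i ∈ Finset.range m, ∑ j ∈ Finset.range m,
      boxInt f (S ∩ cell m i) (T ∩ cell m j) := by
  refine boxInt_sum hf _ _ (fun i => hS.inter (measurableSet_cell m i))
    (fun i => hT.inter (measurableSet_cell m i)) ?_ ?_
    (ae_cells hm (injOn_id _) (mapsTo_id _) hS) (ae_cells hm (injOn_id _) (mapsTo_id _) hT)
  all_goals
    intro i j hij
    exact (cell_disjoint hm hij).mono inter_subset_right inter_subset_right

lemma boxInt_cells_fin {f : ℝ → ℝ → ℝ} (hf : Ker f) {m : ℕ} (hm : 0 < m) {S T : Set ℝ}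
    (hS : USet S) (hT : USet T) :
    boxInt f S T = ∑ i : Fin m, ∑ j : Fin m, boxInt f (S ∩ cell m i) (T ∩ cell m j) := by
  refine boxInt_sum hf _ _ (fun i => hS.inter (measurableSet_cell m i))
    (fun i => hT.inter (measurableSet_cell m i)) ?_ ?_
    (ae_cells_fin hm (injOn_id _) (mapsTo_id _) hS) (ae_cells_fin hm (injOn_id _) (mapsTo_id _) hT)
  all_goals
    intro i j hij
    exact (cell_disjoint hm (fun h => hij (Fin.ext h))).mono inter_subset_right inter_subset_right

/-- For a step function on the `m × m` grid a box integral is a finite bilinear sum. -/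
lemma boxInt_step {f : ℝ → ℝ → ℝ} (hf : Ker f) {m : ℕ} (hm : 0 < m) {a : Fin m → Fin m → ℝ}
    (ha : ∀ i j : Fin m, ∀ x ∈ cell m i, ∀ y ∈ cell m j, f x y = a i j) {S T : Set ℝ}
    (hS : USet S) (hT : USet T) :
    boxInt f S T = ∑ i : Fin m, ∑ j : Fin m,
      a i j * volume.real (S ∩ cell m i) * volume.real (T ∩ cell m j) := by
  rw [boxInt_cells_fin hf hm hS hT]
  refine Finset.sum_congr rfl fun i _ => Finset.sum_congr rfl fun j _ => ?_
  rw [← boxInt_const]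
  exact boxInt_congr (hS.inter (measurableSet_cell m i)) (hT.inter (measurableSet_cell m j))
    fun x hx y hy => ha i j x hx.2 y hy.2

/-! ### Upper and lower step matrices -/

/-- The symmetric matrix with entries `M c d` above the diagonal and `e` on the diagonal. -/
def symExt (M : ℕ → ℕ → ℝ) (e : ℝ) (c d : ℕ) : ℝ :=
  if c < d then M c d else if d < c then M d c else e

lemma symExt_symm (M : ℕ → ℕ → ℝ) (e : ℝ) (c d : ℕ) : symExt M e c d = symExt M e d c := by
  unfold symExt
  rcases lt_trichotomy c d with h | h | h
  · simp [h, h.not_gt]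
  · simp [h]
  · simp [h, h.not_gt]

lemma sum_upper_le (m : ℕ) {M L : ℕ → ℕ → ℝ} (hM : ∀ c d, c < d → d < m → M c d ≤ 1)
    (hL : ∀ c d, c < d → d < m → 0 ≤ L c d)
    (hML : ∀ c d, c + 6 < d → d < m → M c d ≤ L (c + 2) (d - 2)) :
    ∑ c ∈ Finset.range m, ∑ d ∈ Finset.range m, (if c < d then M c d - L c d else 0) ≤ 6 * m := by
  classical
  set P := Finset.range m ×ˢ Finset.range m with hP
  set U := P.filter fun p => p.1 < p.2 with hU
  set N := U.filter fun p => p.2 ≤ p.1 + 6 with hN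
  set F := U.filter fun p => ¬ p.2 ≤ p.1 + 6 with hF
  have memU : ∀ p, p ∈ U ↔ p.1 < p.2 ∧ p.2 < m := by
    intro p; simp only [hU, hP, Finset.mem_filter, Finset.mem_product, Finset.mem_range]; omega
  have e1 : ∑ c ∈ Finset.range m, ∑ d ∈ Finset.range m, (if c < d then M c d - L c d else 0)
      = ∑ p ∈ U, M p.1 p.2 - ∑ p ∈ U, L p.1 p.2 := by
    rw [← Finset.sum_product', ← Finset.sum_sub_distrib, hU, Finset.sum_filter]
  have e2 : ∑ p ∈ U, M p.1 p.2 = ∑ p ∈ N, M p.1 p.2 + ∑ p ∈ F, M p.1 p.2 :=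
    (Finset.sum_filter_add_sum_filter_not _ _ _).symm
  have hNc : ∑ p ∈ N, M p.1 p.2 ≤ 6 * m := by
    have h1 : ∑ p ∈ N, M p.1 p.2 ≤ ∑ p ∈ N, (1:ℝ) := Finset.sum_le_sum fun p hp => by
      have := (memU p).1 (Finset.mem_filter.1 hp).1
      exact hM _ _ this.1 this.2
    have h2 : N ⊆ (Finset.range m ×ˢ Finset.range 6).image fun q => (q.1, q.1 + 1 + q.2) := by
      intro p hp
      have h3 := (Finset.mem_filter.1 hp).2
      have h4 := (memU p).1 (Finset.mem_filter.1 hp).1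
      refine Finset.mem_image.2 ⟨(p.1, p.2 - p.1 - 1), ?_, ?_⟩
      · simp only [Finset.mem_product, Finset.mem_range]; omega
      · ext <;> simp only []; omega
    have h3 : N.card ≤ m * 6 := by
      refine (Finset.card_le_card h2).trans (Finset.card_image_le.trans ?_)
      simp
    have h4 : (N.card : ℝ) ≤ m * 6 := by exact_mod_cast h3
    simp only [Finset.sum_const, nsmul_eq_mul, mul_one] at h1
    linarith
  have hFs : ∑ p ∈ F, M p.1 p.2 ≤ ∑ p ∈ U, L p.1 p.2 := by
    have hF' : ∀ p ∈ F, p.1 + 6 < p.2 ∧ p.2 < m := by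
      intro p hp
      have h3 := (Finset.mem_filter.1 hp).2
      have h4 := (memU p).1 (Finset.mem_filter.1 hp).1
      omega
    calc ∑ p ∈ F, M p.1 p.2 ≤ ∑ p ∈ F, L (p.1 + 2) (p.2 - 2) :=
          Finset.sum_le_sum fun p hp => hML _ _ (hF' p hp).1 (hF' p hp).2
      _ = ∑ q ∈ F.image (fun p => (p.1 + 2, p.2 - 2)), L q.1 q.2 := by
          rw [Finset.sum_image]
          intro p hp q hq h
          have h1 := hF' p hp
          have h2 := hF' q hq
          simp only [Prod.mk.injEq] at h
          ext <;> omega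
      _ ≤ ∑ p ∈ U, L p.1 p.2 := by
          refine Finset.sum_le_sum_of_subset_of_nonneg ?_ fun p hp _ =>
            hL _ _ ((memU p).1 hp).1 ((memU p).1 hp).2
          intro q hq
          obtain ⟨p, hp, rfl⟩ := Finset.mem_image.1 hq
          have h1 := hF' p hp
          rw [memU]
          simp only
          omega
  linarith

/-- If the upper matrix `M` is dominated by the lower matrix `L` after moving two steps towards
the diagonal, then along each antidiagonal the differences telescope, so that their total over the
`m²` entries is only `O(m)`. -/
lemma sum_symExt_le (m : ℕ) {M L : ℕ → ℕ → ℝ} (hM : ∀ c d, c < d → d < m → M c d ≤ 1)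
    (hL : ∀ c d, c < d → d < m → 0 ≤ L c d)
    (hML : ∀ c d, c + 6 < d → d < m → M c d ≤ L (c + 2) (d - 2)) :
    ∑ c ∈ Finset.range m, ∑ d ∈ Finset.range m, (symExt M 1 c d - symExt L 0 c d) ≤ 13 * m := by
  have h1 := sum_upper_le m hM hL hML
  have e : ∀ c d, symExt M 1 c d - symExt L 0 c d = (if c < d then M c d - L c d else 0)
      + (if d < c then M d c - L d c else 0) + (if c = d then 1 else 0) := by
    intro c d
    unfold symExt
    rcases lt_trichotomy c d with h | h | h
    · simp [h, h.not_gt, h.ne]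
    · simp [h]
    · simp [h, h.not_gt, h.ne']
  simp_rw [e, Finset.sum_add_distrib]
  have h2 : ∑ c ∈ Finset.range m, ∑ d ∈ Finset.range m, (if d < c then M d c - L d c else 0)
      ≤ 6 * m := by rw [Finset.sum_comm]; exact h1
  have h3 : ∑ c ∈ Finset.range m, ∑ d ∈ Finset.range m, (if c = d then (1:ℝ) else 0) = m := by
    rw [Finset.sum_congr rfl fun c hc => by rw [Finset.sum_ite_eq, if_pos hc]]
    simp
  linarith

/-! ### Step graphons -/

lemma isGraphon_step (N : ℕ) {F : ℕ → ℕ → ℝ} (hs : ∀ i j, F i j = F j i)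
    (h01 : ∀ i j, F i j ∈ Icc (0:ℝ) 1) :
    IsGraphon (fun x y => F (vertexOf N x) (vertexOf N y)) := by
  refine ⟨?_, fun _ _ => hs _ _, fun _ _ _ _ => h01 _ _⟩
  exact (measurable_of_countable (Function.uncurry F)).comp
    (((measurable_vertexOf N).comp measurable_fst).prodMk
      ((measurable_vertexOf N).comp measurable_snd))

lemma isGraphon_graphStep (G : FinGraph) : IsGraphon (graphStep G) := by
  have := isGraphon_step G.n (F := fun i j => if h : i < G.n ∧ j < G.n then
    (if G.adj ⟨i, h.1⟩ ⟨j, h.2⟩ then (1:ℝ) else 0) else 0) ?_ ?_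
  · exact this
  · intro i j
    by_cases h : i < G.n ∧ j < G.n
    · rw [dif_pos h, dif_pos h.symm, G.symm]
    · rw [dif_neg h, dif_neg fun h' => h h'.symm]
  · intro i j
    split_ifs <;> simp

lemma graphStep_cell (G : FinGraph) {i j : Fin G.n} {x y : ℝ} (hx : x ∈ cell G.n i)
    (hy : y ∈ cell G.n j) : graphStep G x y = if G.adj i j then 1 else 0 := by
  have hN : 0 < G.n := (Nat.zero_le _).trans_lt i.2
  have h1 := vertexOf_eq hN hx
  have h2 := vertexOf_eq hN hy
  unfold graphStep
  rw [dif_pos ⟨h1 ▸ i.2, h2 ▸ j.2⟩]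
  simp only [h1, h2, Fin.eta]

/-! ### From a Robinson limit to good labelings -/

/-- A linear form on the box `∏ [0, p i]` is at most its value at some vertex. -/
lemma exists_sum_le {n : ℕ} (r s p : Fin n → ℝ) (hs : ∀ i, 0 ≤ s i) (hsp : ∀ i, s i ≤ p i) :
    ∃ X : Finset (Fin n), ∑ i, s i * r i ≤ ∑ i ∈ X, p i * r i := by
  classical
  refine ⟨Finset.univ.filter fun i => 0 ≤ r i, ?_⟩
  rw [Finset.sum_filter]
  refine Finset.sum_le_sum fun i _ => ?_
  split_ifs with h
  · exact mul_le_mul_of_nonneg_right (hsp i) h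
  · exact mul_nonpos_of_nonneg_of_nonpos (hs i) (not_le.1 h).le

/-- A bilinear form on a product of boxes attains its maximum at a vertex. -/
lemma bilin_le {n : ℕ} {x : Fin n → Fin n → ℝ} {p : Fin n → ℝ} {B : ℝ}
    (h : ∀ X Y : Finset (Fin n), ∑ i ∈ X, ∑ j ∈ Y, x i j * p i * p j ≤ B) {s t : Fin n → ℝ}
    (hs : ∀ i, 0 ≤ s i) (hsp : ∀ i, s i ≤ p i) (ht : ∀ i, 0 ≤ t i) (htp : ∀ i, t i ≤ p i) :
    ∑ i, ∑ j, x i j * s i * t j ≤ B := by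
  obtain ⟨X, hX⟩ := exists_sum_le (fun i => ∑ j, x i j * t j) s p hs hsp
  obtain ⟨Y, hY⟩ := exists_sum_le (fun j => ∑ i ∈ X, x i j * p i) t p ht htp
  calc ∑ i, ∑ j, x i j * s i * t j = ∑ i, s i * ∑ j, x i j * t j := by
        refine Finset.sum_congr rfl fun i _ => ?_
        rw [Finset.mul_sum]
        exact Finset.sum_congr rfl fun j _ => by ring
    _ ≤ ∑ i ∈ X, p i * ∑ j, x i j * t j := hX
    _ = ∑ j, t j * ∑ i ∈ X, x i j * p i := by
        simp_rw [Finset.mul_sum]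
        rw [Finset.sum_comm]
        exact Finset.sum_congr rfl fun j _ => Finset.sum_congr rfl fun i _ => by ring
    _ ≤ ∑ j ∈ Y, p j * ∑ i ∈ X, x i j * p i := hY
    _ = ∑ i ∈ X, ∑ j ∈ Y, x i j * p i * p j := by
        simp_rw [Finset.mul_sum]
        rw [Finset.sum_comm]
        exact Finset.sum_congr rfl fun j _ => Finset.sum_congr rfl fun i _ => by ring
    _ ≤ B := h X Y

/-- If vertex `i` is represented by a set of measure `p i`, not much smaller than the length `1/N`
of its interval, then a cut-norm bound for the weights `p` yields one for the labeling `σ`. The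
overlaps of `S` and `T` with the cells, divided by `2m`, lie below the weights, so `bilin_le`
applies. -/
lemma transfer_le {N m : ℕ} (hm : 0 < m) {x : Fin N → Fin N → ℝ} {p : Fin N → ℝ}
    (hp : ∀ i, 1 / (2 * m * N) ≤ p i) {B : ℝ}
    (h : ∀ X Y : Finset (Fin N), ∑ i ∈ X, ∑ j ∈ Y, x i j * p i * p j ≤ B)
    (σ : Equiv.Perm (Fin N)) {S T : Set ℝ} :
    ∑ k : Fin N, ∑ l : Fin N, x (σ k) (σ l) * volume.real (S ∩ cell N k)
      * volume.real (T ∩ cell N l) ≤ 4 * m ^ 2 * B := by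
  have hm' : (0:ℝ) < m := by exact_mod_cast hm
  have hle : ∀ (S : Set ℝ) (k : Fin N), volume.real (S ∩ cell N k) / (2 * m) ≤ p (σ k) := by
    intro S k
    refine le_trans ?_ (hp _)
    have h1 : volume.real (S ∩ cell N k) ≤ 1 / N := by
      rw [← volume_cell (i := (k:ℕ))]
      exact measureReal_mono inter_subset_right (by simp [cell])
    calc volume.real (S ∩ cell N k) / (2 * m) ≤ (1 / N) / (2 * m) := by gcongr
      _ = _ := by rw [div_div, mul_comm]
  have key := bilin_le (x := x) (p := p) (B := B) h
    (s := fun i => volume.real (S ∩ cell N (σ.symm i : Fin N)) / (2 * m))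
    (t := fun i => volume.real (T ∩ cell N (σ.symm i : Fin N)) / (2 * m))
    (fun i => by positivity) (fun i => by simpa using hle S (σ.symm i))
    (fun i => by positivity) (fun i => by simpa using hle T (σ.symm i))
  rw [← Equiv.sum_comp σ] at key
  simp_rw [← Equiv.sum_comp σ (fun j => x _ j * _ * _), Equiv.symm_apply_apply] at key
  calc _ = 4 * (m:ℝ) ^ 2 * ∑ k : Fin N, ∑ l : Fin N, x (σ k) (σ l) *
        (volume.real (S ∩ cell N k) / (2 * m)) * (volume.real (T ∩ cell N l) / (2 * m)) := by
        simp_rw [Finset.mul_sum]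
        refine Finset.sum_congr rfl fun k _ => Finset.sum_congr rfl fun l _ => ?_
        field_simp
        norm_num
    _ ≤ _ := by gcongr

lemma real_preimage {φ : ℝ → ℝ} (hφ : IsRearr φ) {B : Set ℝ} (hB : USet B) :
    volume.real (Icc (0:ℝ) 1 ∩ φ ⁻¹' B) = volume.real B := by
  have h := hφ.1.measure_preimage hB.1.nullMeasurableSet
  rw [Measure.restrict_apply (hφ.1.measurable hB.1), Measure.restrict_apply hB.1,
    inter_eq_self_of_subset_left hB.2, inter_comm] at h
  unfold Measure.real
  rw [h]

/-- Each vertex `i` can be assigned to a block `c i` of the partition into `m` intervals with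
which it has a substantial overlap, in such a way that no block receives more than about three
times its share. The fractional assignment given by the overlaps is doubly stochastic up to
scaling; discarding its entries below half the average keeps Hall's condition when each
block is offered about `2N/m` slots. -/
lemma exists_assignment {N m : ℕ} (hm : 0 < m) (hmN : m ≤ N) {φ ψ : ℝ → ℝ} (hφ : IsRearr φ)
    (hψ : IsRearr ψ) :
    ∃ c : Fin N → ℕ, (∀ i, c i < m) ∧
      (∀ i : Fin N, 1 / (2 * m * N) ≤
        volume.real (Icc (0:ℝ) 1 ∩ φ ⁻¹' (cell N i) ∩ ψ ⁻¹' (cell m (c i)))) ∧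
      ∀ d, ((Finset.univ.filter fun i : Fin N => c i = d).card : ℝ) ≤ 3 * N / m := by
  classical
  have hN : 0 < N := hm.trans_le hmN
  have hm' : (0:ℝ) < m := by exact_mod_cast hm
  have hN' : (0:ℝ) < N := by exact_mod_cast hN
  set p : Fin N → ℕ → ℝ := fun i d =>
    volume.real (Icc (0:ℝ) 1 ∩ φ ⁻¹' (cell N i) ∩ ψ ⁻¹' (cell m d)) with hp
  have hp0 : ∀ i d, 0 ≤ p i d := fun i d => measureReal_nonneg
  have hrow : ∀ i : Fin N, ∑ d ∈ Finset.range m, p i d = 1 / N := by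
    intro i
    rw [← real_sum_cells hm hψ.2.injOn hψ.1.measurable hψ.2.mapsTo
      (USet.unit.inter (hφ.1.measurable (measurableSet_cell N i))),
      real_preimage hφ (USet.cell i.2), volume_cell]
  have hcol : ∀ d < m, ∑ i : Fin N, p i d = 1 / m := by
    intro d hd
    have h1 := real_sum_cells hN hφ.2.injOn hφ.1.measurable hφ.2.mapsTo
      (USet.unit.inter (hψ.1.measurable (measurableSet_cell m d)))
    rw [real_preimage hψ (USet.cell hd), volume_cell] at h1
    rw [h1, Finset.sum_range]
    refine Finset.sum_congr rfl fun i _ => ?_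
    rw [hp]; simp only; rw [inter_right_comm]
  -- Each block is offered `K` slots, and vertex `i` may use the slots of the blocks in `nb i`.
  set K : ℕ := 2 * N / m + 1 with hK
  have hK1 : 2 * (N:ℝ) / m ≤ K := by
    rw [div_le_iff₀ hm']
    have : 2 * N < (2 * N / m + 1) * m := Nat.lt_mul_of_div_lt (Nat.lt_succ_self _) hm
    exact_mod_cast this.le
  have hK2 : (K:ℝ) ≤ 3 * N / m := by
    have h1 : ((2 * N / m : ℕ) : ℝ) ≤ (2 * N : ℕ) / m := Nat.cast_div_le
    have h2 : (1:ℝ) ≤ N / m := by rw [le_div_iff₀ hm']; simpa using hmN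
    rw [hK]; push_cast at h1 ⊢
    have : 3 * (N:ℝ) / m = 2 * N / m + N / m := by ring
    linarith
  set δ : ℝ := 1 / (2 * m * N) with hδ
  set nb : Fin N → Finset ℕ := fun i => (Finset.range m).filter fun d => δ ≤ p i d with hnb
  have hhall : ∀ X : Finset (Fin N),
      X.card ≤ (X.biUnion fun i => nb i ×ˢ Finset.range K).card := by
    intro X
    have e1 : (X.biUnion fun i => nb i ×ˢ Finset.range K) = (X.biUnion nb) ×ˢ Finset.range K := by
      ext q; simp only [Finset.mem_biUnion, Finset.mem_product]; tauto
    rw [e1, Finset.card_product, Finset.card_range]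
    have hbig : ∀ i, 1 / (2 * N : ℝ) ≤ ∑ d ∈ nb i, p i d := by
      intro i
      have h1 := Finset.sum_filter_add_sum_filter_not (Finset.range m) (fun d => δ ≤ p i d) (p i)
      have h2 : ∑ d ∈ (Finset.range m).filter (fun d => ¬ δ ≤ p i d), p i d ≤ m * δ := by
        refine (Finset.sum_le_card_nsmul _ _ δ fun d hd =>
          (not_le.1 (Finset.mem_filter.1 hd).2).le).trans ?_
        rw [nsmul_eq_mul]
        gcongr
        exact (Finset.card_filter_le _ _).trans (by simp)
      have h3 : m * δ = 1 / (2 * N) := by rw [hδ]; field_simp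
      have h4 : (1:ℝ) / N = 1 / (2 * N) + 1 / (2 * N) := by field_simp; norm_num
      rw [hrow] at h1
      linarith
    have hsum : (X.card : ℝ) * (1 / (2 * N)) ≤ (X.biUnion nb).card * (1 / m) := by
      calc (X.card : ℝ) * (1 / (2 * N)) = ∑ i ∈ X, 1 / (2 * N : ℝ) := by simp
        _ ≤ ∑ i ∈ X, ∑ d ∈ nb i, p i d := Finset.sum_le_sum fun i _ => hbig i
        _ ≤ ∑ i ∈ X, ∑ d ∈ X.biUnion nb, p i d := Finset.sum_le_sum fun i hi =>
            Finset.sum_le_sum_of_subset_of_nonneg (Finset.subset_biUnion_of_mem nb hi)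
              fun d _ _ => hp0 i d
        _ = ∑ d ∈ X.biUnion nb, ∑ i ∈ X, p i d := Finset.sum_comm
        _ ≤ ∑ d ∈ X.biUnion nb, (1 / m : ℝ) := Finset.sum_le_sum fun d hd => by
            obtain ⟨i, _, hi⟩ := Finset.mem_biUnion.1 hd
            rw [← hcol d (Finset.mem_range.1 (Finset.mem_filter.1 hi).1)]
            exact Finset.sum_le_univ_sum_of_nonneg fun i => hp0 i d
        _ = _ := by simp
    have : (X.card : ℝ) ≤ (X.biUnion nb).card * K := by
      calc (X.card : ℝ) = (X.card * (1 / (2 * N))) * (2 * N) := by field_simp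
        _ ≤ ((X.biUnion nb).card * (1 / m)) * (2 * N) := by gcongr
        _ = (X.biUnion nb).card * (2 * N / m) := by ring
        _ ≤ _ := by gcongr
    exact_mod_cast this
  obtain ⟨f, hfinj, hf⟩ :=
    (Finset.all_card_le_biUnion_card_iff_exists_injective _).1 hhall
  have hf1 : ∀ i, (f i).1 < m ∧ δ ≤ p i (f i).1 ∧ (f i).2 < K := by
    intro i
    have := Finset.mem_product.1 (hf i)
    have h2 := Finset.mem_filter.1 this.1
    exact ⟨Finset.mem_range.1 h2.1, h2.2, Finset.mem_range.1 this.2⟩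
  refine ⟨fun i => (f i).1, fun i => (hf1 i).1, fun i => (hf1 i).2.1, fun d => ?_⟩
  refine le_trans ?_ hK2
  have : (Finset.univ.filter fun i : Fin N => (f i).1 = d).card ≤ (Finset.range K).card := by
    refine Finset.card_le_card_of_injOn (fun i => (f i).2)
      (fun i _ => Finset.mem_coe.2 (Finset.mem_range.2 (hf1 i).2.2)) ?_
    intro i hi j hj hij
    have h1 := (Finset.mem_filter.1 (Finset.mem_coe.1 hi)).2
    have h2 := (Finset.mem_filter.1 (Finset.mem_coe.1 hj)).2
    exact hfinj (Prod.ext (h1.trans h2.symm) hij)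
  rw [Finset.card_range] at this
  exact_mod_cast this

lemma IsRobinson.le {u : ℝ → ℝ → ℝ} (hR : IsRobinson u) {a b c d : ℝ} (h0 : 0 ≤ a) (h1 : a ≤ b)
    (h2 : b ≤ c) (h3 : c ≤ d) (h4 : d ≤ 1) : u a d ≤ u b c :=
  ((hR a b d h0 h1 (h2.trans h3) h4).trans (min_le_right _ _)).trans
    ((hR b c d (h0.trans h1) h2 h3 h4).trans (min_le_left _ _))

lemma sum_fiber_le {N m : ℕ} {c : Fin N → ℕ} (hc : ∀ i, c i < m) {K : ℝ}
    (hK : ∀ d, ((Finset.univ.filter fun i : Fin N => c i = d).card : ℝ) ≤ K) {f : ℕ → ℝ}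
    (hf : ∀ d < m, 0 ≤ f d) : ∑ i, f (c i) ≤ K * ∑ d ∈ Finset.range m, f d := by
  classical
  rw [← Finset.sum_fiberwise_of_maps_to (s := Finset.univ) (t := Finset.range m) (g := c)
    (fun i _ => Finset.mem_range.2 (hc i)), Finset.mul_sum]
  refine Finset.sum_le_sum fun d hd => ?_
  rw [Finset.sum_congr rfl (g := fun _ => f d) fun i hi => by rw [(Finset.mem_filter.1 hi).2]]
  rw [Finset.sum_const, nsmul_eq_mul]
  exact mul_le_mul_of_nonneg_right (hK d) (hf d (Finset.mem_range.1 hd))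

/-- An upper bound, off the diagonal, for a Robinson graphon on the block `(c, d)`. -/
noncomputable def upB (u : ℝ → ℝ → ℝ) (m c d : ℕ) : ℝ := u (((c:ℝ) + 1) / m) ((d:ℝ) / m)

/-- A lower bound, off the diagonal, for a Robinson graphon on the block `(c, d)`. -/
noncomputable def loB (u : ℝ → ℝ → ℝ) (m c d : ℕ) : ℝ := u ((c:ℝ) / m) (((d:ℝ) + 1) / m)

lemma div_mem_Icc {m : ℕ} {a : ℝ} (h0 : 0 ≤ a) (h1 : a ≤ m) : a / m ∈ Icc (0:ℝ) 1 :=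
  ⟨by positivity, div_le_one_of_le₀ h1 (by positivity)⟩

lemma robinson_block_lt {u : ℝ → ℝ → ℝ} (hR : IsRobinson u) {m c d : ℕ}
    (hcd : c < d) (hd : d < m) {x y : ℝ} (hx : x ∈ cell m c) (hy : y ∈ cell m d) :
    loB u m c d ≤ u x y ∧ u x y ≤ upB u m c d := by
  have h1 : ((c:ℝ) + 1) / m ≤ d / m := by gcongr; exact_mod_cast hcd
  have h2 : (0:ℝ) ≤ c / m := by positivity
  have h3 : ((d:ℝ) + 1) / m ≤ 1 := div_le_one_of_le₀ (by exact_mod_cast hd) (by positivity)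
  exact ⟨hR.le h2 hx.1.le (hx.2.trans (h1.trans hy.1.le)) hy.2 h3,
    hR.le (h2.trans hx.1.le) hx.2 h1 hy.1.le (hy.2.trans h3)⟩

lemma robinson_block {u : ℝ → ℝ → ℝ} (hu : IsGraphon u) (hR : IsRobinson u) {m c d : ℕ}
    (hc : c < m) (hd : d < m) {x y : ℝ} (hx : x ∈ cell m c) (hy : y ∈ cell m d) :
    symExt (loB u m) 0 c d ≤ u x y ∧ u x y ≤ symExt (upB u m) 1 c d := by
  unfold symExt
  rcases lt_trichotomy c d with h | h | h
  · simpa only [h, if_true] using robinson_block_lt hR h hd hx hy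
  · subst h
    simpa using hu.2.2 x y (cell_subset hc hx) (cell_subset hd hy)
  · rw [hu.2.1 x y]
    simpa only [h, h.not_gt, if_true, if_false] using robinson_block_lt hR h hc hy hx

lemma symExt_mem {M : ℕ → ℕ → ℝ} {e : ℝ} {m : ℕ} (he : e ∈ Icc (0:ℝ) 1)
    (hM : ∀ c d, c < d → d < m → M c d ∈ Icc (0:ℝ) 1) {c d : ℕ} (hc : c < m) (hd : d < m) :
    symExt M e c d ∈ Icc (0:ℝ) 1 := by
  unfold symExt
  split_ifs with h1 h2
  · exact hM _ _ h1 hd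
  · exact hM _ _ h2 hc
  · exact he

lemma upB_mem {u : ℝ → ℝ → ℝ} (hu : IsGraphon u) {m c d : ℕ} (h : c < d) (hd : d < m) :
    upB u m c d ∈ Icc (0:ℝ) 1 := by
  refine hu.2.2 _ _ (div_mem_Icc (by positivity) ?_) (div_mem_Icc (by positivity) ?_)
  · exact_mod_cast (Nat.succ_le_of_lt h).trans hd.le
  · exact_mod_cast hd.le

lemma loB_mem {u : ℝ → ℝ → ℝ} (hu : IsGraphon u) {m c d : ℕ} (h : c < d) (hd : d < m) :
    loB u m c d ∈ Icc (0:ℝ) 1 := by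
  refine hu.2.2 _ _ (div_mem_Icc (by positivity) ?_) (div_mem_Icc (by positivity) ?_)
  · exact_mod_cast (h.trans hd).le
  · exact_mod_cast hd

lemma upB_le_loB {u : ℝ → ℝ → ℝ} (hR : IsRobinson u) {m c d : ℕ} (h : c + 6 < d) (hd : d < m) :
    upB u m c d ≤ loB u m (c + 2) (d - 2) := by
  have h2 : 2 ≤ d := by omega
  have h3 : ((c:ℝ) + 6) < d := by exact_mod_cast h
  unfold upB loB
  push_cast [h2]
  refine hR.le (by positivity) ?_ ?_ ?_ ?_
  all_goals try exact div_le_div_of_nonneg_right (by linarith) (by positivity)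
  exact (div_mem_Icc (by positivity) (by exact_mod_cast hd.le)).2

/-- The upper step matrix of a Robinson graphon is itself Robinson. -/
lemma symExt_upB_robinson {u : ℝ → ℝ → ℝ} (hu : IsGraphon u) (hR : IsRobinson u) {m a b c : ℕ}
    (hab : a ≤ b) (hbc : b ≤ c) (hc : c < m) :
    symExt (upB u m) 1 a c ≤ symExt (upB u m) 1 a b ∧
      symExt (upB u m) 1 a c ≤ symExt (upB u m) 1 b c := by
  have hle1 := fun {c d} hc hd =>
    (symExt_mem (M := upB u m) (by simp) (fun c d h hd => upB_mem hu h hd)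
      (c := c) (d := d) hc hd : symExt (upB u m) 1 c d ∈ Icc (0:ℝ) 1).2
  have hac := hle1 ((hab.trans hbc).trans_lt hc) hc
  have hc1 : (c:ℝ) / m ≤ 1 := (div_mem_Icc (by positivity) (by exact_mod_cast hc.le)).2
  constructor
  · rcases hab.eq_or_lt with h | h
    · subst h; simpa [symExt] using hac
    · have h' := h.trans_le hbc
      simp only [symExt, h, h', if_true, upB]
      refine hR.le (by positivity) le_rfl ?_ ?_ hc1
      · gcongr; exact_mod_cast h
      · gcongr
  · rcases hbc.eq_or_lt with h | h
    · subst h; simpa [symExt] using hac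
    · have h' := hab.trans_lt h
      simp only [symExt, h, h', if_true, upB]
      refine hR.le (by positivity) ?_ ?_ le_rfl hc1
      · gcongr
      · gcongr; exact_mod_cast h

lemma sum_box_le {N : ℕ} {D : ℝ → ℝ → ℝ} (hD : Ker D) {E : Fin N → Set ℝ} (hE : ∀ i, USet (E i))
    (hdis : Pairwise (Function.onFun Disjoint E)) {a : Fin N → Fin N → ℝ}
    (ha : ∀ i j, ∀ x ∈ E i, ∀ y ∈ E j, a i j ≤ D x y) {ε : ℝ}
    (hε : ∀ S T, USet S → USet T → boxInt D S T ≤ ε) (X Y : Finset (Fin N)) :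
    ∑ i ∈ X, ∑ j ∈ Y, a i j * volume.real (E i) * volume.real (E j) ≤ ε := by
  have hU : ∀ X : Finset (Fin N), USet (⋃ i ∈ X, E i) := fun X =>
    ⟨Finset.measurableSet_biUnion _ fun i _ => (hE i).1, iUnion₂_subset fun i _ => (hE i).2⟩
  refine le_trans ?_ (hε _ _ (hU X) (hU Y))
  rw [boxInt_sum hD X Y hE hE hdis hdis (ae_eq_refl _) (ae_eq_refl _)]
  exact Finset.sum_le_sum fun i _ => Finset.sum_le_sum fun j _ =>
    le_boxInt hD (hE i) (hE j) (ha i j)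

/-- If a graph is close in cut distance to a Robinson graphon, some labeling of it is close in
cut norm to a Robinson step graphon. The labeling lists the vertices in the order of the blocks
assigned to them; the step graphon takes on each pair of vertex intervals the upper block
bound of `u`. -/
lemma exists_labeling (G : FinGraph) {u : ℝ → ℝ → ℝ} (hu : IsGraphon u) (hR : IsRobinson u)
    {m : ℕ} (hm : 0 < m) (hmN : m ≤ G.n) {φ ψ : ℝ → ℝ} (hφ : IsRearr φ) (hψ : IsRearr ψ) {ε : ℝ}
    (hε : CutLE (fun x y => graphStep G (φ x) (φ y) - u (ψ x) (ψ y)) ε) :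
    ∃ (σ : Equiv.Perm (Fin G.n)) (g : ℝ → ℝ → ℝ), IsGraphon g ∧ IsRobinson g ∧
      CutLE (fun x y => graphStep (relabel G σ) x y - g x y) (4 * m ^ 2 * ε + 117 / m) := by
  obtain ⟨c, hcm, hcp, hcard⟩ := exists_assignment hm hmN hφ hψ
  have hN : 0 < G.n := hm.trans_le hmN
  have hm' : (0:ℝ) < m := by exact_mod_cast hm
  have hN' : (0:ℝ) < G.n := by exact_mod_cast hN
  set σ : Equiv.Perm (Fin G.n) := Tuple.sort c with hσ
  have hmono : Monotone (c ∘ σ) := Tuple.monotone_sort c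
  set cc : ℕ → ℕ := fun k => if h : k < G.n then c (σ ⟨k, h⟩) else 0 with hcc
  have hccm : ∀ k, cc k < m := by
    intro k
    simp only [hcc]
    split_ifs
    · exact hcm _
    · exact hm
  have hccF : ∀ k : Fin G.n, cc k = c (σ k) := fun k => by simp [hcc]
  set Up := symExt (upB u m) 1 with hUp
  set Lo := symExt (loB u m) 0 with hLo
  have hUpm : ∀ {a b}, a < m → b < m → Up a b ∈ Icc (0:ℝ) 1 := fun ha hb =>
    symExt_mem (by simp) (fun c d h hd => upB_mem hu h hd) ha hb
  have hLom : ∀ {a b}, a < m → b < m → Lo a b ∈ Icc (0:ℝ) 1 := fun ha hb =>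
    symExt_mem (by simp) (fun c d h hd => loB_mem hu h hd) ha hb
  have hLU : ∀ {a b}, a < m → b < m → 0 ≤ Up a b - Lo a b := by
    intro a b ha hb
    have hne : ∀ i : ℕ, ((i:ℝ) + 1) / m ∈ cell m i := fun i =>
      ⟨by gcongr; linarith, le_rfl⟩
    have := robinson_block hu hR ha hb (hne a) (hne b)
    linarith [this.1, this.2]
  set g : ℝ → ℝ → ℝ := fun x y => Up (cc (vertexOf G.n x)) (cc (vertexOf G.n y)) with hg
  set gl : ℝ → ℝ → ℝ := fun x y => Lo (cc (vertexOf G.n x)) (cc (vertexOf G.n y)) with hgl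
  have hgG : IsGraphon g := isGraphon_step G.n (F := fun i j => Up (cc i) (cc j))
    (fun i j => symExt_symm _ _ _ _) fun i j => hUpm (hccm i) (hccm j)
  have hglG : IsGraphon gl := isGraphon_step G.n (F := fun i j => Lo (cc i) (cc j))
    (fun i j => symExt_symm _ _ _ _) fun i j => hLom (hccm i) (hccm j)
  have hgR : IsRobinson g := by
    have hccmono : ∀ {x y : ℝ}, x ≤ y → y ≤ 1 →
        cc (vertexOf G.n x) ≤ cc (vertexOf G.n y) := by
      intro x y hxy hy
      have h1 := vertexOf_lt hN (hxy.trans hy)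
      have h2 := vertexOf_lt hN hy
      simp only [hcc, h1, h2, dif_pos]
      exact hmono (Fin.mk_le_mk.2 (vertexOf_mono _ hxy))
    intro x y z _ hxy hyz hz
    exact le_min_iff.2 (symExt_upB_robinson hu hR (hccmono hxy (hyz.trans hz)) (hccmono hyz hz)
      (hccm _))
  -- `E i` is the part of the coupling where vertex `i` meets its assigned block. On `E i × E j` the
  -- graph is constant and `u` lies between the lower and the upper block bound.
  set E : Fin G.n → Set ℝ := fun i =>
    Icc (0:ℝ) 1 ∩ φ ⁻¹' (cell G.n i) ∩ ψ ⁻¹' (cell m (c i)) with hE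
  have hEU : ∀ i, USet (E i) := fun i =>
    (USet.unit.inter (hφ.1.measurable (measurableSet_cell _ _))).inter
      (hψ.1.measurable (measurableSet_cell _ _))
  have hEd : Pairwise (Function.onFun Disjoint E) := by
    intro i j hij
    refine Set.disjoint_left.2 fun x hx hx' => ?_
    exact Set.disjoint_left.1 (cell_disjoint hN (fun h => hij (Fin.ext h))) hx.1.2 hx'.1.2
  have kG : Ker fun x y => graphStep G (φ x) (φ y) :=
    ((isGraphon_graphStep G).comp hφ).ker
  have ku : Ker fun x y => u (ψ x) (ψ y) := (hu.comp hψ).ker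
  set A : Fin G.n → Fin G.n → ℝ := fun i j => if G.adj i j then 1 else 0 with hA
  have hGA : ∀ i j, ∀ x ∈ E i, ∀ y ∈ E j, graphStep G (φ x) (φ y) = A i j :=
    fun i j x hx y hy => graphStep_cell G hx.1.2 hy.1.2
  have huE : ∀ i j, ∀ x ∈ E i, ∀ y ∈ E j,
      Lo (c i) (c j) ≤ u (ψ x) (ψ y) ∧ u (ψ x) (ψ y) ≤ Up (c i) (c j) :=
    fun i j x hx y hy => robinson_block hu hR (hcm i) (hcm j) hx.2 hy.2
  have hAU := sum_box_le (kG.sub ku) hEU hEd (a := fun i j => A i j - Up (c i) (c j))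
    (fun i j x hx y hy => by
      rw [hGA i j x hx y hy]; linarith [(huE i j x hx y hy).2])
    (fun S T hS hT => (le_abs_self _).trans (hε S T hS hT))
  have hAL := sum_box_le (ku.sub kG) hEU hEd (a := fun i j => Lo (c i) (c j) - A i j)
    (fun i j x hx y hy => by
      rw [hGA i j x hx y hy]; linarith [(huE i j x hx y hy).1])
    (fun S T hS hT => by
      have := (neg_le_abs _).trans (hε S T hS hT)
      rw [boxInt_sub kG ku hS hT] at this
      rw [boxInt_sub ku kG hS hT]; linarith)
  have kH : Ker (graphStep (relabel G σ)) := (isGraphon_graphStep _).ker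
  have hHcell : ∀ i j : Fin G.n, ∀ x ∈ cell G.n i, ∀ y ∈ cell G.n j,
      graphStep (relabel G σ) x y = A (σ i) (σ j) := fun i j x hx y hy =>
    graphStep_cell (relabel G σ) (i := i) (j := j) hx hy
  have hgcell : ∀ i j : Fin G.n, ∀ x ∈ cell G.n i, ∀ y ∈ cell G.n j,
      g x y = Up (c (σ i)) (c (σ j)) := fun i j x hx y hy => by
    simp only [hg, vertexOf_eq hN hx, vertexOf_eq hN hy, hccF]
  have hglcell : ∀ i j : Fin G.n, ∀ x ∈ cell G.n i, ∀ y ∈ cell G.n j,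
      gl x y = Lo (c (σ i)) (c (σ j)) := fun i j x hx y hy => by
    simp only [hgl, vertexOf_eq hN hx, vertexOf_eq hN hy, hccF]
  refine ⟨σ, g, hgG, hgR, fun S T hS hT => ?_⟩
  have e1 : boxInt (fun x y => graphStep (relabel G σ) x y - g x y) S T ≤ 4 * m ^ 2 * ε := by
    rw [boxInt_step (kH.sub hgG.ker) hN (a := fun i j => A (σ i) (σ j) - Up (c (σ i)) (c (σ j)))
      (fun i j x hx y hy => by rw [hHcell i j x hx y hy, hgcell i j x hx y hy]) hS hT]
    exact transfer_le hm (x := fun i j => A i j - Up (c i) (c j)) hcp hAU σ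
  have e2 : boxInt (fun x y => gl x y - graphStep (relabel G σ) x y) S T ≤ 4 * m ^ 2 * ε := by
    rw [boxInt_step (hglG.ker.sub kH) hN (a := fun i j => Lo (c (σ i)) (c (σ j)) - A (σ i) (σ j))
      (fun i j x hx y hy => by rw [hHcell i j x hx y hy, hglcell i j x hx y hy]) hS hT]
    exact transfer_le hm (x := fun i j => Lo (c i) (c j) - A i j) hcp hAL σ
  have e3 : boxInt (fun x y => g x y - gl x y) S T ≤ 117 / m := by
    rw [boxInt_step (hgG.ker.sub hglG.ker) hN
      (a := fun i j => Up (c (σ i)) (c (σ j)) - Lo (c (σ i)) (c (σ j)))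
      (fun i j x hx y hy => by rw [hgcell i j x hx y hy, hglcell i j x hx y hy]) hS hT]
    have hv : ∀ (S : Set ℝ) (k : ℕ), volume.real (S ∩ cell G.n k) ≤ 1 / G.n := by
      intro S k
      rw [← volume_cell (i := k)]
      exact measureReal_mono inter_subset_right (by simp [cell])
    calc _ ≤ ∑ i : Fin G.n, ∑ j : Fin G.n,
          (Up (c (σ i)) (c (σ j)) - Lo (c (σ i)) (c (σ j))) * (1 / G.n) * (1 / G.n) := by
          refine Finset.sum_le_sum fun i _ => Finset.sum_le_sum fun j _ => ?_
          have h0 := hLU (hcm (σ i)) (hcm (σ j))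
          have := hv S i
          have := hv T j
          gcongr
      _ = (∑ i : Fin G.n, ∑ j : Fin G.n, (Up (c i) (c j) - Lo (c i) (c j)))
            * (1 / G.n * (1 / G.n)) := by
          rw [← Equiv.sum_comp σ (fun i => ∑ j, (Up (c i) (c j) - Lo (c i) (c j)))]
          simp_rw [← Equiv.sum_comp σ (fun j => (Up _ (c j) - Lo _ (c j))), Finset.sum_mul,
            mul_assoc]
      _ ≤ (3 * G.n / m * ∑ a ∈ Finset.range m, (3 * G.n / m * ∑ b ∈ Finset.range m,
            (Up a b - Lo a b))) * (1 / G.n * (1 / G.n)) := by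
          refine mul_le_mul_of_nonneg_right ?_ (by positivity)
          refine le_trans ?_ (sum_fiber_le hcm hcard
            (f := fun a => 3 * G.n / m * ∑ b ∈ Finset.range m, (Up a b - Lo a b)) ?_)
          · exact Finset.sum_le_sum fun i _ => sum_fiber_le hcm hcard
              (f := fun b => Up (c i) b - Lo (c i) b) fun b hb => hLU (hcm i) hb
          · intro a ha
            have := Finset.sum_nonneg fun b hb => hLU ha (Finset.mem_range.1 hb)
            positivity
      _ = (9 / m ^ 2) * ∑ a ∈ Finset.range m, ∑ b ∈ Finset.range m, (Up a b - Lo a b) := by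
          rw [← Finset.mul_sum]
          field_simp
          ring
      _ ≤ (9 / m ^ 2) * (13 * m) := by
          refine mul_le_mul_of_nonneg_left ?_ (by positivity)
          exact sum_symExt_le m (fun c d h hd => (upB_mem hu h hd).2)
            (fun c d h hd => (loB_mem hu h hd).1) fun c d h hd => upB_le_loB hR h hd
      _ = 117 / m := by field_simp; norm_num
  have hpos : (0:ℝ) ≤ 117 / m := by positivity
  rw [boxInt_sub hglG.ker kH hS hT] at e2
  rw [boxInt_sub hgG.ker hglG.ker hS hT] at e3
  rw [abs_le]
  rw [boxInt_sub kH hgG.ker hS hT] at e1 ⊢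
  constructor <;> linarith

lemma gammaTildeG_le (G : FinGraph) (σ : Equiv.Perm (Fin G.n)) :
    gammaTildeG G ≤ Gamma (graphStep (relabel G σ)) :=
  csInf_le ⟨0, by rintro r ⟨σ, rfl⟩; exact Gamma_nonneg _⟩ ⟨σ, rfl⟩

lemma gammaTildeG_nonneg (G : FinGraph) : 0 ≤ gammaTildeG G :=
  Real.sInf_nonneg (by rintro r ⟨σ, rfl⟩; exact Gamma_nonneg _)

lemma CutLE.mono {D : ℝ → ℝ → ℝ} {a b : ℝ} (h : CutLE D a) (hab : a ≤ b) : CutLE D b :=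
  fun S T hS hT => (h S T hS hT).trans hab

lemma CutLE.triangle {f g h : ℝ → ℝ → ℝ} (hf : Ker f) (hg : Ker g) (hh : Ker h) {a b : ℝ}
    (h1 : CutLE (fun x y => f x y - h x y) a) (h2 : CutLE (fun x y => g x y - h x y) b) :
    CutLE (fun x y => f x y - g x y) (a + b) := by
  intro S T hS hT
  have e1 := abs_le.1 (h1 S T hS hT)
  have e2 := abs_le.1 (h2 S T hS hT)
  rw [boxInt_sub hf hh hS hT] at e1
  rw [boxInt_sub hg hh hS hT] at e2
  rw [boxInt_sub hf hg hS hT, abs_le]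
  constructor <;> linarith [e1.1, e1.2, e2.1, e2.2]

/-- A Robinson graphon at cut distance zero from the limit forces `Γ̃ → 0`. -/
lemma gammaTilde_tendsto_zero {w : ℝ → ℝ → ℝ} (hw : IsGraphon w) {G : ℕ → FinGraph}
    (hgrow : Tendsto (fun n => (G n).n) atTop atTop)
    (hconv : Tendsto (fun n => cutDist (graphStep (G n)) w) atTop (nhds 0))
    {u : ℝ → ℝ → ℝ} (hu : IsGraphon u) (hR : IsRobinson u) (huw : cutDist u w = 0) :
    Tendsto (fun n => gammaTildeG (G n)) atTop (nhds 0) := by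
  refine tendsto_order.2 ⟨fun a ha => Eventually.of_forall fun n =>
    ha.trans_le (gammaTildeG_nonneg _), fun a ha => ?_⟩
  obtain ⟨k, hk⟩ := exists_nat_gt (8 / a)
  have hk0 : (0:ℝ) < k := lt_trans (by positivity) hk
  have hk0' : 0 < k := by exact_mod_cast hk0
  set η : ℝ := a / (16 * (k + 1) * 2) with hη
  have hη0 : 0 < η := by positivity
  obtain ⟨m, hm⟩ := exists_nat_gt (234 / η)
  have hm0 : (0:ℝ) < m := lt_trans (by positivity) hm
  have hm0' : 0 < m := by exact_mod_cast hm0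
  set ε : ℝ := η / (16 * m ^ 2) with hε
  have hε0 : 0 < ε := by positivity
  filter_upwards [hgrow.eventually_ge_atTop m, hconv.eventually_lt_const hε0] with n hn hn'
  obtain ⟨φ, hφ, hφ'⟩ := exists_of_cutDist_lt (isGraphon_graphStep (G n)) hw hn'
  obtain ⟨ψ, hψ, hψ'⟩ := exists_of_cutDist_lt hu hw (huw.trans_lt hε0)
  have h1 := CutLE.triangle ((isGraphon_graphStep (G n)).comp hφ).ker (hu.comp hψ).ker hw.ker
    hφ' hψ'
  obtain ⟨σ, g, hg, hgR, hcut⟩ := exists_labeling (G n) hu hR hm0' hn hφ hψ h1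
  have h2 : 4 * (m:ℝ) ^ 2 * (ε + ε) + 117 / m ≤ η := by
    have e1 : 4 * (m:ℝ) ^ 2 * (ε + ε) = η / 2 := by rw [hε]; field_simp; norm_num
    have e2 : 117 / (m:ℝ) ≤ η / 2 := by
      rw [div_lt_iff₀ hη0] at hm
      rw [div_le_iff₀ hm0]; linarith
    linarith
  refine (gammaTildeG_le _ σ).trans_lt ((Gamma_le_of_cutLE (isGraphon_graphStep _) hg hgR hη0.le
    (hcut.mono h2) hk0').trans_lt ?_)
  have e1 : 8 * ((k:ℝ) + 1) * η = a / 4 := by rw [hη]; field_simp; norm_num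
  have e2 : 4 / (k:ℝ) < a / 2 := by
    rw [div_lt_iff₀ ha] at hk
    rw [div_lt_iff₀ hk0]; linarith
  linarith

/-! ### Robinson limits of graphons with vanishing `Γ` -/

/-- `U S T` is the limit along the ultrafilter `𝒰` of the integrals of `W n` over `S × T`. -/
def IsBoxLim (W : ℕ → ℝ → ℝ → ℝ) (𝒰 : Ultrafilter ℕ) (U : Set ℝ → Set ℝ → ℝ) : Prop :=
  ∀ S T, USet S → USet T → Tendsto (fun n => boxInt (W n) S T) 𝒰 (nhds (U S T))

lemma exists_isBoxLim {W : ℕ → ℝ → ℝ → ℝ} (hW : ∀ n, IsGraphon (W n)) (𝒰 : Ultrafilter ℕ) :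
    ∃ U, IsBoxLim W 𝒰 U := by
  refine ⟨fun S T => limUnder (𝒰 : Filter ℕ) fun n => boxInt (W n) S T, fun S T hS hT => ?_⟩
  refine tendsto_nhds_limUnder ?_
  have hmem : ∀ n, boxInt (W n) S T ∈ Icc (0:ℝ) 1 := fun n =>
    ⟨boxInt_nonneg (hW n) hS hT, (boxInt_le_mul (hW n) hS hT).trans
      (mul_le_one₀ hS.real_le measureReal_nonneg hT.real_le)⟩
  obtain ⟨L, -, hL⟩ := isCompact_Icc.ultrafilter_le_nhds' (𝒰.map fun n => boxInt (W n) S T)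
    (Ultrafilter.mem_map.2 (Filter.univ_mem' hmem))
  exact ⟨L, hL⟩

/-- The limiting average over the product of the `i`-th and `j`-th intervals of length `1/m`. -/
noncomputable def avg (U : Set ℝ → Set ℝ → ℝ) (m i j : ℕ) : ℝ :=
  m ^ 2 * U (cell m i) (cell m j)

open Classical in
/-- The contribution to `limKer` of the pair `(i, j)` of cells of the `m`-th equipartition, where
`k = (m, i, j)`: the limiting average over the pair, at those
points `(x, y)` for which `x` and `y` both lie between the two cells. -/
noncomputable def limTerm (U : Set ℝ → Set ℝ → ℝ) (k : ℕ × ℕ × ℕ) (x y : ℝ) : ℝ :=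
  if k.2.1 < k.1 ∧ k.2.2 < k.1 ∧ ((k.2.1:ℝ) + 1) / k.1 ≤ min x y ∧ max x y ≤ (k.2.2:ℝ) / k.1
  then avg U k.1 k.2.1 k.2.2 else 0

/-- The Robinson limit: at `(x, y)` the supremum of the limiting averages over all pairs of cells
enclosing `x` and `y`. Shrinking the interval `[x, y]` enlarges the set of enclosing pairs,
so the Robinson property is automatic. -/
noncomputable def limKer (U : Set ℝ → Set ℝ → ℝ) (x y : ℝ) : ℝ := ⨆ k, limTerm U k x y

section Limit

variable {W : ℕ → ℝ → ℝ → ℝ} {𝒰 : Ultrafilter ℕ} {U : Set ℝ → Set ℝ → ℝ}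

lemma IsBoxLim.mem (hU : IsBoxLim W 𝒰 U) (hW : ∀ n, IsGraphon (W n)) {S T : Set ℝ}
    (hS : USet S) (hT : USet T) : 0 ≤ U S T ∧ U S T ≤ volume.real S * volume.real T :=
  ⟨ge_of_tendsto' (hU S T hS hT) fun n => boxInt_nonneg (hW n) hS hT,
    le_of_tendsto' (hU S T hS hT) fun n => boxInt_le_mul (hW n) hS hT⟩

lemma avg_mem (hU : IsBoxLim W 𝒰 U) (hW : ∀ n, IsGraphon (W n)) {m i j : ℕ} (hi : i < m)
    (hj : j < m) : avg U m i j ∈ Icc (0:ℝ) 1 := by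
  have hm : (0:ℝ) < m := by exact_mod_cast (Nat.zero_le i).trans_lt hi
  obtain ⟨h1, h2⟩ := hU.mem hW (USet.cell hi) (USet.cell hj)
  rw [volume_cell, volume_cell] at h2
  refine ⟨mul_nonneg (by positivity) h1, ?_⟩
  calc avg U m i j ≤ m ^ 2 * (1 / m * (1 / m)) := mul_le_mul_of_nonneg_left h2 (by positivity)
    _ = 1 := by field_simp

lemma limTerm_mem (hU : IsBoxLim W 𝒰 U) (hW : ∀ n, IsGraphon (W n)) (k : ℕ × ℕ × ℕ) (x y : ℝ) :
    limTerm U k x y ∈ Icc (0:ℝ) 1 := by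
  unfold limTerm
  split_ifs with h
  · exact avg_mem hU hW h.1 h.2.1
  · simp

lemma limTerm_le_limKer (hU : IsBoxLim W 𝒰 U) (hW : ∀ n, IsGraphon (W n)) (k : ℕ × ℕ × ℕ)
    (x y : ℝ) : limTerm U k x y ≤ limKer U x y :=
  le_ciSup (f := fun k => limTerm U k x y)
    ⟨1, by rintro _ ⟨k, rfl⟩; exact (limTerm_mem hU hW k x y).2⟩ k

lemma isGraphon_limKer (hU : IsBoxLim W 𝒰 U) (hW : ∀ n, IsGraphon (W n)) :
    IsGraphon (limKer U) := by
  refine ⟨?_, fun x y => ?_, fun x y _ _ => ⟨?_, ?_⟩⟩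
  · refine Measurable.iSup fun k => ?_
    refine Measurable.ite ?_ measurable_const measurable_const
    refine (MeasurableSet.const _).inter ((MeasurableSet.const _).inter (MeasurableSet.inter ?_ ?_))
    · exact measurableSet_le measurable_const (measurable_fst.min measurable_snd)
    · exact measurableSet_le (measurable_fst.max measurable_snd) measurable_const
  · unfold limKer limTerm
    simp only [min_comm x y, max_comm x y]
  · exact (limTerm_mem hU hW (0, 0, 0) x y).1.trans (limTerm_le_limKer hU hW _ x y)
  · exact ciSup_le fun k => (limTerm_mem hU hW k x y).2

lemma isRobinson_limKer (hU : IsBoxLim W 𝒰 U) (hW : ∀ n, IsGraphon (W n)) :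
    IsRobinson (limKer U) := by
  have key : ∀ x z a b : ℝ, min x z ≤ min a b → max a b ≤ max x z →
      limKer U x z ≤ limKer U a b := by
    intro x z a b h1 h2
    refine ciSup_le fun k => le_trans ?_ (limTerm_le_limKer hU hW k a b)
    by_cases h : k.2.1 < k.1 ∧ k.2.2 < k.1 ∧
        ((k.2.1:ℝ) + 1) / k.1 ≤ min x z ∧ max x z ≤ (k.2.2:ℝ) / k.1
    · unfold limTerm
      rw [if_pos h, if_pos ⟨h.1, h.2.1, h.2.2.1.trans h1, h2.trans h.2.2.2⟩]
    · refine le_trans ?_ (limTerm_mem hU hW k a b).1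
      unfold limTerm
      rw [if_neg h]
  intro x y z _ hxy hyz _
  refine le_min (key _ _ _ _ ?_ ?_) (key _ _ _ _ ?_ ?_)
  all_goals simp [hxy, hyz, hxy.trans hyz]

lemma lim_left (hU : IsBoxLim W 𝒰 U) (hW : ∀ n, IsGraphon (W n))
    (hΓ : Tendsto (fun n => Gamma (W n)) 𝒰 (nhds 0)) {X Y Z : Set ℝ} (hX : USet X)
    (hY : USet Y) (hZ : USet Z) (hXY : SetLT X Y) (hYZ : SetLT Y Z) :
    volume.real Y * U X Z ≤ volume.real Z * U X Y := by
  have := le_of_tendsto_of_tendsto' ((hU X Z hX hZ).const_mul (volume.real Y))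
    (((hU X Y hX hY).const_mul (volume.real Z)).add hΓ)
    fun n => Gamma_left (hW n) hX hY hZ hXY hYZ
  simpa using this

lemma lim_right (hU : IsBoxLim W 𝒰 U) (hW : ∀ n, IsGraphon (W n))
    (hΓ : Tendsto (fun n => Gamma (W n)) 𝒰 (nhds 0)) {X Y Z : Set ℝ} (hX : USet X)
    (hY : USet Y) (hZ : USet Z) (hXY : SetLT X Y) (hYZ : SetLT Y Z) :
    volume.real Y * U X Z ≤ volume.real X * U Y Z := by
  have := le_of_tendsto_of_tendsto' ((hU X Z hX hZ).const_mul (volume.real Y))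
    (((hU Y Z hY hZ).const_mul (volume.real X)).add hΓ)
    fun n => Gamma_right (hW n) hX hY hZ hXY hYZ
  simpa using this

/-- On a far off-diagonal block, `limKer` is at most the average one step closer to the diagonal:
every pair of cells enclosing a point of the block lies further out than that inner pair. -/
lemma limKer_le (hU : IsBoxLim W 𝒰 U) (hW : ∀ n, IsGraphon (W n))
    (hΓ : Tendsto (fun n => Gamma (W n)) 𝒰 (nhds 0)) {m c d : ℕ} (hcd : c + 2 < d) (hd : d < m)
    {x y : ℝ} (hx : x ∈ cell m c) (hy : y ∈ cell m d) :
    limKer U x y ≤ avg U m (c + 1) (d - 1) := by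
  have hm : (0:ℝ) < m := by exact_mod_cast (Nat.zero_le d).trans_lt hd
  have hc1 : c + 1 < m := by omega
  have hd1 : d - 1 < m := by omega
  refine ciSup_le fun k => ?_
  obtain ⟨p, i, j⟩ := k
  unfold limTerm
  split_ifs with h
  · obtain ⟨hi, hj, h1, h2⟩ := h
    simp only at hi hj h1 h2 ⊢
    have hp : (0:ℝ) < p := by exact_mod_cast (Nat.zero_le i).trans_lt hi
    have h1' : ((i:ℝ) + 1) / p ≤ x := h1.trans (min_le_left _ _)
    have h2' : y ≤ (j:ℝ) / p := (le_max_right _ _).trans h2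
    have hXY : SetLT (cell p i) (cell m (c + 1)) :=
      cell_setLT (h1'.trans (hx.2.trans (by push_cast; rfl)))
    have hYY : SetLT (cell m (c + 1)) (cell m (d - 1)) := cell_setLT' (by omega)
    have hdZ : SetLT (cell m (d - 1)) (cell p j) := by
      refine cell_setLT (le_trans ?_ (hy.1.le.trans h2'))
      gcongr
      exact_mod_cast (by omega : d - 1 + 1 ≤ d)
    have hYZ : SetLT (cell m (c + 1)) (cell p j) := by
      refine cell_setLT (le_trans ?_ (hy.1.le.trans h2'))
      gcongr
      exact_mod_cast (by omega : c + 1 + 1 ≤ d)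
    have e1 := lim_right hU hW hΓ (USet.cell hi) (USet.cell hc1) (USet.cell hj) hXY hYZ
    have e2 := lim_left hU hW hΓ (USet.cell hc1) (USet.cell hd1) (USet.cell hj) hYY hdZ
    simp only [volume_cell] at e1 e2
    have e1' : (p:ℝ) * U (cell p i) (cell p j) ≤ m * U (cell m (c + 1)) (cell p j) := by
      have := mul_le_mul_of_nonneg_left e1 (by positivity : (0:ℝ) ≤ m * p)
      calc _ = m * p * (1 / m * U (cell p i) (cell p j)) := by field_simp
        _ ≤ _ := this
        _ = _ := by field_simp
    have e2' : (p:ℝ) * U (cell m (c + 1)) (cell p j)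
        ≤ m * U (cell m (c + 1)) (cell m (d - 1)) := by
      have := mul_le_mul_of_nonneg_left e2 (by positivity : (0:ℝ) ≤ m * p)
      calc _ = m * p * (1 / m * U (cell m (c + 1)) (cell p j)) := by field_simp
        _ ≤ _ := this
        _ = _ := by field_simp
    unfold avg
    nlinarith [mul_le_mul_of_nonneg_left e1' hp.le, mul_le_mul_of_nonneg_left e2' hm.le]
  · exact (avg_mem hU hW hc1 hd1).1

/-- The pair of cells one step further out encloses every point of the block. -/
lemma le_limKer (hU : IsBoxLim W 𝒰 U) (hW : ∀ n, IsGraphon (W n)) {m c d : ℕ} (hc : 1 ≤ c)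
    (hcd : c < d) (hd : d + 1 < m) {x y : ℝ} (hx : x ∈ cell m c) (hy : y ∈ cell m d) :
    avg U m (c - 1) (d + 1) ≤ limKer U x y := by
  refine le_trans (le_of_eq ?_) (limTerm_le_limKer hU hW (m, c - 1, d + 1) x y)
  have hxy : x ≤ y := (cell_setLT' hcd x hx y hy).le
  unfold limTerm
  rw [if_pos]
  refine ⟨show c - 1 < m by omega, hd, ?_, ?_⟩
  · rw [min_eq_left hxy]
    push_cast [hc]
    simpa using hx.1.le
  · rw [max_eq_right hxy]
    push_cast
    exact hy.2

/-- A far off-diagonal block integral of a graphon is at most what its average over the next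
pair of cells towards the diagonal predicts, up to `Γ`. -/
lemma far_block_le {f : ℝ → ℝ → ℝ} (hf : IsGraphon f) {m c d : ℕ} (hcd : c + 2 < d) (hd : d < m)
    {S T : Set ℝ} (hS : USet S) (hT : USet T) (hSc : S ⊆ cell m c) (hTd : T ⊆ cell m d) :
    boxInt f S T ≤ volume.real S * volume.real T * (m ^ 2 * boxInt f (cell m (c + 1))
      (cell m (d - 1))) + 2 * m * Gamma f := by
  have hm : (0:ℝ) < m := by exact_mod_cast (Nat.zero_le d).trans_lt hd
  have hc1 : c + 1 < m := by omega
  have hd1 : d - 1 < m := by omega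
  have hS1 : volume.real S ≤ 1 / m := by
    rw [← volume_cell (i := c)]; exact measureReal_mono hSc (by simp [cell])
  have hlt : ∀ {a b}, a < b → SetLT (cell m a) (cell m b) := fun h => cell_setLT' h
  have e1 := Gamma_right hf hS (USet.cell hc1) hT
    (fun x hx y hy => hlt (Nat.lt_succ_self c) x (hSc hx) y hy)
    (fun x hx y hy => hlt (by omega) x hx y (hTd hy))
  have e2 := Gamma_left hf (USet.cell hc1) (USet.cell hd1) hT (hlt (by omega))
    (fun x hx y hy => hlt (by omega) x hx y (hTd hy))
  rw [volume_cell] at e1 e2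
  set I := boxInt f (cell m (c + 1)) (cell m (d - 1))
  set J := boxInt f (cell m (c + 1)) T
  set γ := Gamma f
  have hγ : 0 ≤ γ := Gamma_nonneg f
  have e2' : J ≤ m * (volume.real T * I + γ) := by
    have := mul_le_mul_of_nonneg_left e2 hm.le
    rwa [← mul_assoc, mul_one_div_cancel hm.ne', one_mul] at this
  have e1' : boxInt f S T ≤ m * (volume.real S * J + γ) := by
    have := mul_le_mul_of_nonneg_left e1 hm.le
    rwa [← mul_assoc, mul_one_div_cancel hm.ne', one_mul] at this
  have hmS : m * volume.real S ≤ 1 := by rwa [le_div_iff₀ hm, mul_comm] at hS1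
  have hS0 : 0 ≤ volume.real S := measureReal_nonneg
  have e3 : (m:ℝ) * volume.real S * J ≤ m * volume.real S * (m * (volume.real T * I + γ)) :=
    mul_le_mul_of_nonneg_left e2' (by positivity)
  have e4 : (m:ℝ) * volume.real S * (m * γ) ≤ 1 * (m * γ) :=
    mul_le_mul_of_nonneg_right hmS (by positivity)
  linarith

/-- A block integral of a graphon is at least what its average over the pair of cells one step
away from the diagonal predicts, up to `Γ`. -/
lemma le_far_block {f : ℝ → ℝ → ℝ} (hf : IsGraphon f) {m c d : ℕ} (hc : 1 ≤ c) (hcd : c < d)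
    (hd : d + 1 < m) {S T : Set ℝ} (hS : USet S) (hT : USet T) (hSc : S ⊆ cell m c)
    (hTd : T ⊆ cell m d) :
    volume.real S * volume.real T * (m ^ 2 * boxInt f (cell m (c - 1)) (cell m (d + 1)))
      ≤ boxInt f S T + 2 * m * Gamma f := by
  have hm : (0:ℝ) < m := by exact_mod_cast (Nat.zero_le d).trans_lt ((Nat.lt_succ_self d).trans hd)
  have hc1 : c - 1 < m := by omega
  have hT1 : volume.real T ≤ 1 / m := by
    rw [← volume_cell (i := d)]; exact measureReal_mono hTd (by simp [cell])
  have hlt : ∀ {a b}, a < b → SetLT (cell m a) (cell m b) := fun h => cell_setLT' h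
  have e1 := Gamma_right hf (USet.cell hc1) hS (USet.cell hd)
    (fun x hx y hy => hlt (by omega) x hx y (hSc hy))
    (fun x hx y hy => hlt (by omega) x (hSc hx) y hy)
  have e2 := Gamma_left hf hS hT (USet.cell hd)
    (fun x hx y hy => hlt hcd x (hSc hx) y (hTd hy))
    (fun x hx y hy => hlt (by omega) x (hTd hx) y hy)
  rw [volume_cell] at e1 e2
  set I := boxInt f (cell m (c - 1)) (cell m (d + 1))
  set J := boxInt f S (cell m (d + 1))
  set γ := Gamma f
  have hγ : 0 ≤ γ := Gamma_nonneg f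
  have e1' : m * (volume.real S * I) ≤ J + m * γ := by
    have := mul_le_mul_of_nonneg_left e1 hm.le
    rwa [mul_add, ← mul_assoc (m:ℝ) (1 / m), mul_one_div_cancel hm.ne', one_mul] at this
  have e2' : m * (volume.real T * J) ≤ boxInt f S T + m * γ := by
    have := mul_le_mul_of_nonneg_left e2 hm.le
    rwa [mul_add, ← mul_assoc (m:ℝ) (1 / m), mul_one_div_cancel hm.ne', one_mul] at this
  have hmT : m * volume.real T ≤ 1 := by rwa [le_div_iff₀ hm, mul_comm] at hT1
  have hT0 : 0 ≤ volume.real T := measureReal_nonneg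
  have e3 : (m:ℝ) * volume.real T * (m * (volume.real S * I)) ≤ m * volume.real T * (J + m * γ) :=
    mul_le_mul_of_nonneg_left e1' (by positivity)
  have e4 : (m:ℝ) * volume.real T * (m * γ) ≤ 1 * (m * γ) :=
    mul_le_mul_of_nonneg_right hmT (by positivity)
  linarith

/-- Upper block bounds for `limKer`; trivial near the diagonal. -/
noncomputable def limUp (U : Set ℝ → Set ℝ → ℝ) (m c d : ℕ) : ℝ :=
  if c + 2 < d then avg U m (c + 1) (d - 1) else 1

/-- Lower block bounds for `limKer`; trivial near the diagonal and at the boundary. -/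
noncomputable def limLo (U : Set ℝ → Set ℝ → ℝ) (m c d : ℕ) : ℝ :=
  if c + 2 < d ∧ 1 ≤ c ∧ d + 1 < m then avg U m (c - 1) (d + 1) else 0

lemma limUp_mem (hU : IsBoxLim W 𝒰 U) (hW : ∀ n, IsGraphon (W n)) {m c d : ℕ} (hd : d < m) :
    limUp U m c d ∈ Icc (0:ℝ) 1 := by
  unfold limUp
  split_ifs with h
  · exact avg_mem hU hW (by omega) (by omega)
  · simp

lemma limLo_mem (hU : IsBoxLim W 𝒰 U) (hW : ∀ n, IsGraphon (W n)) {m c d : ℕ} :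
    limLo U m c d ∈ Icc (0:ℝ) 1 := by
  unfold limLo
  split_ifs with h
  · exact avg_mem hU hW (by omega) (by omega)
  · simp

lemma limKer_bounds (hU : IsBoxLim W 𝒰 U) (hW : ∀ n, IsGraphon (W n))
    (hΓ : Tendsto (fun n => Gamma (W n)) 𝒰 (nhds 0)) {m c d : ℕ} (hcd : c < d) (hd : d < m)
    {x y : ℝ} (hx : x ∈ cell m c) (hy : y ∈ cell m d) :
    limLo U m c d ≤ limKer U x y ∧ limKer U x y ≤ limUp U m c d := by
  have h01 := (isGraphon_limKer hU hW).2.2 x y (cell_subset (hcd.trans hd) hx) (cell_subset hd hy)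
  unfold limLo limUp
  constructor
  · split_ifs with h
    · exact le_limKer hU hW h.2.1 hcd h.2.2 hx hy
    · exact h01.1
  · split_ifs with h
    · exact limKer_le hU hW hΓ h hd hx hy
    · exact h01.2

lemma limLo_le_limUp (hU : IsBoxLim W 𝒰 U) (hW : ∀ n, IsGraphon (W n))
    (hΓ : Tendsto (fun n => Gamma (W n)) 𝒰 (nhds 0)) {m c d : ℕ} (hcd : c < d) (hd : d < m) :
    limLo U m c d ≤ limUp U m c d := by
  have hm : (0:ℝ) < m := by exact_mod_cast (Nat.zero_le d).trans_lt hd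
  have hne : ∀ i : ℕ, ((i:ℝ) + 1) / m ∈ cell m i := fun i => ⟨by gcongr; linarith, le_rfl⟩
  have := limKer_bounds hU hW hΓ hcd hd (hne c) (hne d)
  exact this.1.trans this.2

/-- `W n` and `limKer U` satisfy the same block bounds, up to the error `δ` in the averages and
`Γ(W n)`. -/
lemma block_diff_lt (hU : IsBoxLim W 𝒰 U) (hW : ∀ n, IsGraphon (W n))
    (hΓ : Tendsto (fun n => Gamma (W n)) 𝒰 (nhds 0)) {n m c d : ℕ} (hcd : c < d) (hd : d < m)
    {δ : ℝ} (hδ0 : 0 ≤ δ) (hδ : ∀ i < m, ∀ j < m,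
      |boxInt (W n) (cell m i) (cell m j) - U (cell m i) (cell m j)| ≤ δ)
    {S T : Set ℝ} (hS : USet S) (hT : USet T) (hSc : S ⊆ cell m c) (hTd : T ⊆ cell m d) :
    |boxInt (W n) S T - boxInt (limKer U) S T| ≤
      (limUp U m c d - limLo U m c d) * volume.real S * volume.real T
        + (δ + 2 * m * Gamma (W n)) := by
  have hm : (0:ℝ) < m := by exact_mod_cast (Nat.zero_le d).trans_lt hd
  have hu := isGraphon_limKer hU hW
  have hγ : 0 ≤ 2 * m * Gamma (W n) := mul_nonneg (by positivity) (Gamma_nonneg _)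
  have u1 := boxInt_le hu.ker hS hT (c := limUp U m c d)
    fun x hx y hy => (limKer_bounds hU hW hΓ hcd hd (hSc hx) (hTd hy)).2
  have u2 := le_boxInt hu.ker hS hT (c := limLo U m c d)
    fun x hx y hy => (limKer_bounds hU hW hΓ hcd hd (hSc hx) (hTd hy)).1
  have hvv : volume.real S * volume.real T * m ^ 2 ≤ 1 := by
    have h1 : volume.real S ≤ 1 / m := by
      rw [← volume_cell (i := c)]; exact measureReal_mono hSc (by simp [cell])
    have h2 : volume.real T ≤ 1 / m := by
      rw [← volume_cell (i := d)]; exact measureReal_mono hTd (by simp [cell])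
    calc _ ≤ (1 / m) * (1 / m) * (m:ℝ) ^ 2 := by gcongr
      _ = 1 := by field_simp
  have herr : volume.real S * volume.real T * (m ^ 2 * δ) ≤ δ := by
    rw [← mul_assoc]; exact mul_le_of_le_one_left hδ0 hvv
  have hvv0 : 0 ≤ volume.real S * volume.real T * (m:ℝ) ^ 2 := by positivity
  have w1 : boxInt (W n) S T ≤ limUp U m c d * volume.real S * volume.real T
      + (δ + 2 * m * Gamma (W n)) := by
    unfold limUp
    split_ifs with h
    · have e := far_block_le (hW n) h hd hS hT hSc hTd
      have e' := (abs_le.1 (hδ (c + 1) (by omega) (d - 1) (by omega))).2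
      have := mul_le_mul_of_nonneg_left e' hvv0
      unfold avg
      linarith
    · have := boxInt_le_mul (hW n) hS hT
      linarith
  have w2 : limLo U m c d * volume.real S * volume.real T
      ≤ boxInt (W n) S T + (δ + 2 * m * Gamma (W n)) := by
    unfold limLo
    split_ifs with h
    · have e := le_far_block (hW n) h.2.1 hcd h.2.2 hS hT hSc hTd
      have e' := (abs_le.1 (hδ (c - 1) (by omega) (d + 1) h.2.2)).1
      have := mul_le_mul_of_nonneg_left e' hvv0
      unfold avg
      linarith
    · have := boxInt_nonneg (hW n) hS hT
      linarith
  rw [abs_le]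
  constructor <;> linarith

lemma block_diff (hU : IsBoxLim W 𝒰 U) (hW : ∀ n, IsGraphon (W n))
    (hΓ : Tendsto (fun n => Gamma (W n)) 𝒰 (nhds 0)) {n m c d : ℕ} (hc : c < m) (hd : d < m)
    {δ : ℝ} (hδ0 : 0 ≤ δ) (hδ : ∀ i < m, ∀ j < m,
      |boxInt (W n) (cell m i) (cell m j) - U (cell m i) (cell m j)| ≤ δ)
    {S T : Set ℝ} (hS : USet S) (hT : USet T) (hSc : S ⊆ cell m c) (hTd : T ⊆ cell m d) :
    |boxInt (W n) S T - boxInt (limKer U) S T| ≤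
      (symExt (limUp U m) 1 c d - symExt (limLo U m) 0 c d) * (1 / m * (1 / m))
        + (δ + 2 * m * Gamma (W n)) := by
  have hm : (0:ℝ) < m := by exact_mod_cast (Nat.zero_le d).trans_lt hd
  have hu := isGraphon_limKer hU hW
  have hγ : 0 ≤ 2 * m * Gamma (W n) := mul_nonneg (by positivity) (Gamma_nonneg _)
  have h1 : volume.real S ≤ 1 / m := by
    rw [← volume_cell (i := c)]; exact measureReal_mono hSc (by simp [cell])
  have h2 : volume.real T ≤ 1 / m := by
    rw [← volume_cell (i := d)]; exact measureReal_mono hTd (by simp [cell])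
  have h3 : volume.real S * volume.real T ≤ 1 / m * (1 / m) := by gcongr
  unfold symExt
  rcases lt_trichotomy c d with h | h | h
  · simp only [h, if_true]
    refine (block_diff_lt hU hW hΓ h hd hδ0 hδ hS hT hSc hTd).trans ?_
    rw [mul_assoc]
    have := mul_le_mul_of_nonneg_left h3 (sub_nonneg.2 (limLo_le_limUp hU hW hΓ h hd))
    linarith
  · have := boxInt_sub_abs_le (hW n) hu hS hT
    rw [boxInt_sub (hW n).ker hu.ker hS hT] at this
    simp only [h, lt_irrefl, if_false]
    linarith
  · simp only [h, h.not_gt, if_true, if_false]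
    rw [boxInt_comm (hW n).ker (hW n).2.1 hS hT, boxInt_comm hu.ker hu.2.1 hS hT]
    refine (block_diff_lt hU hW hΓ h hc hδ0 hδ hT hS hTd hSc).trans ?_
    rw [mul_assoc, mul_comm (volume.real T)]
    have := mul_le_mul_of_nonneg_left h3 (sub_nonneg.2 (limLo_le_limUp hU hW hΓ h hc))
    linarith

/-- Once the `m²` block integrals of `W n` are near their limits and `Γ(W n)` is small, `W n` is
close to `limKer U` in cut norm. The gap between the block bounds contributes `13 / m`. -/
lemma cutLE_limKer (hU : IsBoxLim W 𝒰 U) (hW : ∀ n, IsGraphon (W n))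
    (hΓ : Tendsto (fun n => Gamma (W n)) 𝒰 (nhds 0)) {n m : ℕ} (hm : 0 < m)
    {δ : ℝ} (hδ0 : 0 ≤ δ) (hδ : ∀ i < m, ∀ j < m,
      |boxInt (W n) (cell m i) (cell m j) - U (cell m i) (cell m j)| ≤ δ) :
    CutLE (fun x y => W n x y - limKer U x y)
      (13 / m + m ^ 2 * (δ + 2 * m * Gamma (W n))) := by
  have hm' : (0:ℝ) < m := by exact_mod_cast hm
  have hu := isGraphon_limKer hU hW
  intro S T hS hT
  rw [boxInt_sub (hW n).ker hu.ker hS hT, boxInt_cells (hW n).ker hm hS hT,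
    boxInt_cells hu.ker hm hS hT, ← Finset.sum_sub_distrib]
  simp_rw [← Finset.sum_sub_distrib]
  calc _ ≤ ∑ c ∈ Finset.range m, ∑ d ∈ Finset.range m,
        ((symExt (limUp U m) 1 c d - symExt (limLo U m) 0 c d) * (1 / m * (1 / m))
          + (δ + 2 * m * Gamma (W n))) := by
        refine (Finset.abs_sum_le_sum_abs _ _).trans (Finset.sum_le_sum fun c hc =>
          (Finset.abs_sum_le_sum_abs _ _).trans (Finset.sum_le_sum fun d hd => ?_))
        exact block_diff hU hW hΓ (Finset.mem_range.1 hc) (Finset.mem_range.1 hd) hδ0 hδ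
          (hS.inter (measurableSet_cell _ _)) (hT.inter (measurableSet_cell _ _))
          inter_subset_right inter_subset_right
    _ = (∑ c ∈ Finset.range m, ∑ d ∈ Finset.range m,
          (symExt (limUp U m) 1 c d - symExt (limLo U m) 0 c d)) * (1 / m * (1 / m))
          + m ^ 2 * (δ + 2 * m * Gamma (W n)) := by
        simp_rw [Finset.sum_add_distrib, Finset.sum_mul]
        simp only [Finset.sum_const, Finset.card_range, nsmul_eq_mul]
        ring
    _ ≤ 13 * m * (1 / m * (1 / m)) + m ^ 2 * (δ + 2 * m * Gamma (W n)) := by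
        gcongr
        refine sum_symExt_le m (fun c d _ hd => (limUp_mem hU hW hd).2)
          (fun c d _ _ => (limLo_mem hU hW).1) fun c d h hd => ?_
        unfold limUp limLo
        rw [if_pos (by omega), if_pos (by omega)]
        have e1 : c + 2 - 1 = c + 1 := by omega
        have e2 : d - 2 + 1 = d - 1 := by omega
        rw [e1, e2]
    _ = _ := by field_simp

end Limit

/-- Graphons with `Γ → 0` come arbitrarily cut-close, infinitely often, to one Robinson graphon. -/
lemma exists_robinson_limit {W : ℕ → ℝ → ℝ → ℝ} (hW : ∀ n, IsGraphon (W n))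
    (hΓ : Tendsto (fun n => Gamma (W n)) atTop (nhds 0)) :
    ∃ u, IsGraphon u ∧ IsRobinson u ∧
      ∀ η > 0, ∃ᶠ n in atTop, CutLE (fun x y => W n x y - u x y) η := by
  obtain ⟨𝒰, h𝒰⟩ := Ultrafilter.exists_le (atTop : Filter ℕ)
  obtain ⟨U, hU⟩ := exists_isBoxLim hW 𝒰
  have hΓ' := hΓ.mono_left h𝒰
  refine ⟨limKer U, isGraphon_limKer hU hW, isRobinson_limKer hU hW, fun η hη => ?_⟩
  refine Frequently.filter_mono (Eventually.frequently (f := (𝒰 : Filter ℕ)) ?_) h𝒰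
  obtain ⟨m, hm⟩ := exists_nat_gt (26 / η)
  have hm0 : (0:ℝ) < m := lt_trans (by positivity) hm
  have hm0' : 0 < m := by exact_mod_cast hm0
  set δ : ℝ := η / (4 * m ^ 2) with hδ
  have hδ0 : 0 < δ := by positivity
  have hev : ∀ᶠ n in (𝒰 : Filter ℕ), ∀ i ∈ Finset.range m, ∀ j ∈ Finset.range m,
      |boxInt (W n) (cell m i) (cell m j) - U (cell m i) (cell m j)| ≤ δ := by
    refine (Filter.eventually_all_finset _).2 fun i hi =>
      (Filter.eventually_all_finset _).2 fun j hj => ?_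
    filter_upwards [Metric.tendsto_nhds.1 (hU _ _ (USet.cell (Finset.mem_range.1 hi))
      (USet.cell (Finset.mem_range.1 hj))) δ hδ0] with n hn
    exact hn.le
  filter_upwards [hev, hΓ'.eventually_lt_const (by positivity : (0:ℝ) < δ / (2 * m))] with n h1 h2
  refine (cutLE_limKer hU hW hΓ' hm0' hδ0.le fun i hi j hj =>
    h1 i (Finset.mem_range.2 hi) j (Finset.mem_range.2 hj)).mono ?_
  have e1 : 13 / (m:ℝ) ≤ η / 2 := by
    rw [div_lt_iff₀ hη] at hm
    rw [div_le_iff₀ hm0]; linarith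
  have e2 : 2 * m * Gamma (W n) ≤ δ := by
    rw [lt_div_iff₀ (by positivity)] at h2; linarith
  have e3 : (m:ℝ) ^ 2 * (δ + 2 * m * Gamma (W n)) ≤ m ^ 2 * (δ + δ) := by gcongr
  have e4 : (m:ℝ) ^ 2 * (δ + δ) = η / 2 := by rw [hδ]; field_simp; norm_num
  linarith

/-! ### Relabelings as rearrangements -/

open Classical in
/-- The interval exchange of `[0,1]` translating the `i`-th cell onto the `π i`-th one. -/
noncomputable def exch {N : ℕ} (π : Equiv.Perm (Fin N)) (x : ℝ) : ℝ :=
  if 0 < x then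
    x + if h : vertexOf N x < N then ((π ⟨vertexOf N x, h⟩ : ℕ) - (vertexOf N x : ℕ) : ℝ) / N else 0
  else x

lemma exch_eq {N : ℕ} (π : Equiv.Perm (Fin N)) {i : Fin N} {x : ℝ} (hx : x ∈ cell N i) :
    exch π x = x + ((π i : ℕ) - (i : ℕ) : ℝ) / N := by
  have hN : 0 < N := (Nat.zero_le _).trans_lt i.2
  have h0 : 0 < x := (by positivity : (0:ℝ) ≤ (i:ℕ) / N).trans_lt hx.1
  have h1 := vertexOf_eq hN hx
  unfold exch
  rw [if_pos h0, dif_pos (h1 ▸ i.2)]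
  simp only [h1, Fin.eta]

lemma exch_zero {N : ℕ} (π : Equiv.Perm (Fin N)) : exch π 0 = 0 := by simp [exch]

lemma add_mem_cell_iff {N i j : ℕ} {x : ℝ} :
    x + ((j:ℝ) - i) / N ∈ cell N j ↔ x ∈ cell N i := by
  have e1 : (j:ℝ) / N = i / N + ((j:ℝ) - i) / N := by ring
  have e2 : ((j:ℝ) + 1) / N = (i + 1) / N + ((j:ℝ) - i) / N := by ring
  unfold cell
  rw [mem_Ioc, mem_Ioc, e1, e2, add_lt_add_iff_right, add_le_add_iff_right]

lemma exch_mem {N : ℕ} (π : Equiv.Perm (Fin N)) {i : Fin N} {x : ℝ} (hx : x ∈ cell N i) :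
    exch π x ∈ cell N (π i) := by
  rw [exch_eq π hx]
  exact add_mem_cell_iff.2 hx

lemma exch_symm {N : ℕ} (hN : 0 < N) (π : Equiv.Perm (Fin N)) {x : ℝ} (hx : x ∈ Icc (0:ℝ) 1) :
    exch π.symm (exch π x) = x ∧ exch π x ∈ Icc (0:ℝ) 1 := by
  rcases hx.1.eq_or_lt with h | h
  · subst h
    simp [exch_zero]
  · have h1 : x ∈ cell N (⟨vertexOf N x, vertexOf_lt hN hx.2⟩ : Fin N) := mem_cell_vertexOf hN h
    refine ⟨?_, cell_subset (Fin.is_lt _) (exch_mem π h1)⟩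
    rw [exch_eq _ (exch_mem π h1), exch_eq π h1, Equiv.symm_apply_apply]
    ring

lemma measurable_exch {N : ℕ} (π : Equiv.Perm (Fin N)) : Measurable (exch π) := by
  refine Measurable.ite measurableSet_Ioi (measurable_id.add ?_) measurable_id
  exact (measurable_of_countable fun k : ℕ =>
    if h : k < N then ((π ⟨k, h⟩ : ℕ) - (k : ℕ) : ℝ) / N else 0).comp (measurable_vertexOf N)

lemma isRearr_exch {N : ℕ} (hN : 0 < N) (π : Equiv.Perm (Fin N)) : IsRearr (exch π) := by
  have hmaps : ∀ π : Equiv.Perm (Fin N), MapsTo (exch π) (Icc 0 1) (Icc 0 1) :=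
    fun π x hx => (exch_symm hN π hx).2
  have hbij : BijOn (exch π) (Icc 0 1) (Icc 0 1) := by
    refine InvOn.bijOn (f' := exch π.symm) ⟨fun x hx => (exch_symm hN π hx).1, fun x hx => ?_⟩
      (hmaps π) (hmaps π.symm)
    simpa using (exch_symm hN π.symm hx).1
  refine ⟨⟨measurable_exch π, ?_⟩, hbij⟩
  ext B hB
  have hB' := measurable_exch π hB
  rw [Measure.map_apply (measurable_exch π) hB, Measure.restrict_apply hB',
    Measure.restrict_apply hB]
  have hP : USet (Icc 0 1 ∩ exch π ⁻¹' B) := USet.unit.inter hB'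
  have hQ : USet (Icc 0 1 ∩ B) := USet.unit.inter hB
  rw [inter_comm, inter_comm B, ← ENNReal.toReal_eq_toReal_iff' hP.lt_top.ne hQ.lt_top.ne]
  change volume.real _ = volume.real _
  rw [real_sum_cells hN (injOn_id _) measurable_id (mapsTo_id _) hP,
    real_sum_cells hN (injOn_id _) measurable_id (mapsTo_id _) hQ, Finset.sum_range,
    Finset.sum_range,
    ← Equiv.sum_comp π fun i : Fin N => volume.real (Icc 0 1 ∩ B ∩ id ⁻¹' cell N i)]
  refine Finset.sum_congr rfl fun i _ => ?_
  have e : Icc 0 1 ∩ exch π ⁻¹' B ∩ id ⁻¹' cell N i =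
      (fun x : ℝ => x + ((π i : ℕ) - (i : ℕ) : ℝ) / N) ⁻¹'
        (Icc 0 1 ∩ B ∩ id ⁻¹' cell N (π i)) := by
    ext x
    simp only [mem_inter_iff, mem_preimage, id, add_mem_cell_iff]
    constructor
    · rintro ⟨⟨_, h2⟩, h3⟩
      have h4 := cell_subset (Fin.is_lt _) (exch_mem π h3)
      rw [exch_eq π h3] at h2 h4
      exact ⟨⟨h4, h2⟩, h3⟩
    · rintro ⟨⟨_, h2⟩, h3⟩
      rw [← exch_eq π h3] at h2
      exact ⟨⟨cell_subset i.2 h3, h2⟩, h3⟩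
  unfold Measure.real
  rw [e, measure_preimage_add_right]

/-- Undoing a relabeling by the corresponding interval exchange recovers the original graph. -/
lemma boxInt_relabel (G : FinGraph) (hN : 0 < G.n) (σ : Equiv.Perm (Fin G.n)) {S T : Set ℝ}
    (hS : USet S) (hT : USet T) :
    boxInt (fun x y => graphStep (relabel G σ) (exch σ.symm x) (exch σ.symm y)) S T
      = boxInt (graphStep G) S T := by
  have hA : ∀ i j : Fin G.n, ∀ x ∈ cell G.n i, ∀ y ∈ cell G.n j,
      graphStep G x y = if G.adj i j then 1 else 0 := fun i j x hx y hy => graphStep_cell G hx hy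
  rw [boxInt_step (isGraphon_graphStep G).ker hN hA hS hT]
  refine boxInt_step ((isGraphon_graphStep _).comp (isRearr_exch hN σ.symm)).ker hN ?_ hS hT
  intro i j x hx y hy
  have := graphStep_cell (relabel G σ) (i := σ.symm i) (j := σ.symm j)
    (exch_mem σ.symm hx) (exch_mem σ.symm hy)
  simpa [relabel] using this

lemma CutLE.symm {f g : ℝ → ℝ → ℝ} (hf : Ker f) (hg : Ker g) {η : ℝ}
    (h : CutLE (fun x y => f x y - g x y) η) : CutLE (fun x y => g x y - f x y) η := by
  intro S T hS hT
  have := h S T hS hT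
  rw [boxInt_sub hf hg hS hT, abs_sub_comm] at this
  rwa [boxInt_sub hg hf hS hT]

lemma IsRearr.comp {φ ψ : ℝ → ℝ} (hφ : IsRearr φ) (hψ : IsRearr ψ) : IsRearr (φ ∘ ψ) :=
  ⟨hφ.1.comp hψ.1, hφ.2.comp hψ.2⟩

/-- If `Γ̃ → 0`, the limit is at cut distance zero from a Robinson graphon. -/
lemma exists_robinson {w : ℝ → ℝ → ℝ} (hw : IsGraphon w) {G : ℕ → FinGraph}
    (hgrow : Tendsto (fun n => (G n).n) atTop atTop)
    (hconv : Tendsto (fun n => cutDist (graphStep (G n)) w) atTop (nhds 0))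
    (hΓ : Tendsto (fun n => gammaTildeG (G n)) atTop (nhds 0)) :
    ∃ u : ℝ → ℝ → ℝ, IsGraphon u ∧ IsRobinson u ∧ cutDist u w = 0 := by
  -- Near-optimal labelings suffice, so the infimum in `gammaTildeG` need not be attained.
  have hex : ∀ n : ℕ, ∃ σ : Equiv.Perm (Fin (G n).n),
      Gamma (graphStep (relabel (G n) σ)) < gammaTildeG (G n) + 1 / ((n:ℝ) + 1) := by
    intro n
    obtain ⟨r, ⟨σ, rfl⟩, hr⟩ := exists_lt_of_csInf_lt
      (s := {r : ℝ | ∃ σ : Equiv.Perm (Fin (G n).n), r = Gamma (graphStep (relabel (G n) σ))})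
      ⟨_, 1, rfl⟩ (lt_add_of_pos_right (gammaTildeG (G n)) Nat.one_div_pos_of_nat)
    exact ⟨σ, hr⟩
  choose σ hσ using hex
  have hΓW : Tendsto (fun n => Gamma (graphStep (relabel (G n) (σ n)))) atTop (nhds 0) := by
    have h := hΓ.add (tendsto_one_div_add_atTop_nhds_zero_nat (𝕜 := ℝ))
    rw [add_zero] at h
    exact squeeze_zero (fun n => Gamma_nonneg _) (fun n => (hσ n).le) h
  obtain ⟨u, hu, hR, hfreq⟩ := exists_robinson_limit
    (fun n => isGraphon_graphStep (relabel (G n) (σ n))) hΓW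
  refine ⟨u, hu, hR, le_antisymm (le_of_forall_pos_le_add fun η hη => ?_) (cutDist_nonneg u w)⟩
  have hη2 : 0 < η / 2 := by positivity
  obtain ⟨n, hn1, hn2, hn3⟩ := ((hfreq (η / 2) hη2).and_eventually
    ((hconv.eventually_lt_const hη2).and (hgrow.eventually_gt_atTop 0))).exists
  have hτ := isRearr_exch hn3 (σ n).symm
  have kG := (isGraphon_graphStep (G n)).ker
  obtain ⟨φ, hφ, hφ'⟩ := exists_of_cutDist_lt (isGraphon_graphStep (G n)) hw hn2
  have kW := isGraphon_graphStep (relabel (G n) (σ n))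
  have h1 : CutLE (fun x y => graphStep (G n) x y -
      u (exch (σ n).symm x) (exch (σ n).symm y)) (η / 2) := by
    intro S T hS hT
    have := CutLE.comp kW.ker hu.ker hτ hn1 S T hS hT
    rw [boxInt_sub (kW.comp hτ).ker (hu.comp hτ).ker hS hT,
      boxInt_relabel (G n) hn3 (σ n) hS hT] at this
    rwa [boxInt_sub kG (hu.comp hτ).ker hS hT]
  have h2 := CutLE.comp kG (hu.comp hτ).ker hφ h1
  have kGφ := ((isGraphon_graphStep (G n)).comp hφ).ker
  have kuφ := (hu.comp (hτ.comp hφ)).ker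
  have h3 := CutLE.triangle kuφ hw.ker kGφ (CutLE.symm kGφ kuφ h2) (CutLE.symm kGφ hw.ker hφ')
  rw [add_halves] at h3
  rw [zero_add]
  exact cutDist_le hη.le (hτ.comp hφ) h3

/-- For a growing graph sequence converging to a graphon `w`, the limit `w` is
Robinsonian if and only if `Γ̃(G_n) → 0`. -/
theorem robinsonian_iff_gammaTilde_tendsto_zero
    (w : ℝ → ℝ → ℝ) (hw : IsGraphon w) (G : ℕ → FinGraph)
    (hgrow : Tendsto (fun n => (G n).n) atTop atTop)
    (hconv : Tendsto (fun n => cutDist (graphStep (G n)) w) atTop (nhds 0)) :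
    (∃ u : ℝ → ℝ → ℝ, IsGraphon u ∧ IsRobinson u ∧ cutDist u w = 0) ↔
      Tendsto (fun n => gammaTildeG (G n)) atTop (nhds 0) := by
  exact ⟨fun ⟨_, hu, hR, huw⟩ => gammaTilde_tendsto_zero hw hgrow hconv hu hR huw,
    fun h => exists_robinson hw hgrow hconv h⟩
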